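/- arXiv:2202.04008 — 3 statements merged into one kernel-verified Lean document; each statement's English description precedes it below -/
import Mathlib

section
/- For each irrational x ∈ (0,1) and each n ≥ 2, let m = m(x,n) and r = r(x,n) be the unique integers with ∑_{i=1}^m a_i ≤ n < ∑_{i=1}^{m+1} a_i and r = n − ∑_{i=1}^m a_i, and set |I_n^{𝒮ℬ}(x)| = 1/(((r+1)q_m + q_{m−1}) q_m), which is the length of the Stern-Brocot interval of depth n containing x. Then the functions x ↦ −log |I_n^{𝒮ℬ}(x)| / ((π²/6)·(n/log n)) converge to 1 in Lebesgue measure as n → ∞; that is, the Stern-Brocot sequence of partitions admits f_{𝒮ℬ}(n) = (π²/6)·n/log n (for n ≥ 2) as weight function in measure with respect to the Lebesgue measure. -/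
open MeasureTheory Filter Set

noncomputable section

/-- The set `E_n^ℱ` of endpoints of the Farey partition `F_n`: rationals of `[0,1]` whose
denominator in lowest terms is at most `n+1`. -/
def fareyPts (n : ℕ) : Set ℝ :=
  {x | ∃ p q : ℕ, q ≠ 0 ∧ q ≤ n + 1 ∧ p ≤ q ∧ Nat.gcd p q = 1 ∧ x = (p : ℝ) / q}

/-- The interval `I_n^ℱ(x)` of the Farey partition `F_n` containing `x`: the open interval
between the largest Farey point of order `n+1` below `x` and the smallest one above `x`. -/
def fareyInterval (n : ℕ) (x : ℝ) : Set ℝ :=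
  Set.Ioo (sSup (fareyPts n ∩ Set.Iio x)) (sInf (fareyPts n ∩ Set.Ioi x))

/-- The partial quotient `a_{m+1}` of the continued fraction expansion of `x ∈ (0,1)`,
obtained from the Gauss map: `cfa x m = ⌊1 / T_G^m x⌋` where `T_G y = {1/y}`. -/
def cfa (x : ℝ) (m : ℕ) : ℕ := ⌊1 / ((fun y => Int.fract (1 / y))^[m] x)⌋₊

/-- Numerators of the convergents of `x`, shifted by one: `cfp x (m+1) = p_m`, with
`p_{-1} = 1`, `p_0 = 0`, `p_{m+1} = a_{m+1} p_m + p_{m-1}`. -/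
def cfp (x : ℝ) : ℕ → ℕ
  | 0 => 1
  | 1 => 0
  | m + 2 => cfa x m * cfp x (m + 1) + cfp x m

/-- Denominators of the convergents of `x`, shifted by one: `cfq x (m+1) = q_m`, with
`q_{-1} = 0`, `q_0 = 1`, `q_{m+1} = a_{m+1} q_m + q_{m-1}`. -/
def cfq (x : ℝ) : ℕ → ℕ
  | 0 => 0
  | 1 => 1
  | m + 2 => cfa x m * cfq x (m + 1) + cfq x m

/-- The fundamental interval `I_n^{𝒞ℱ}(x)` of depth `n` of the continued fraction
expansion: the open interval with endpoints `p_n/q_n` and `(p_n+p_{n-1})/(q_n+q_{n-1})`,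
the former being the left endpoint iff `n` is even. -/
def cfInterval (x : ℝ) (n : ℕ) : Set ℝ :=
  if Even n then
    Set.Ioo ((cfp x (n + 1) : ℝ) / (cfq x (n + 1) : ℝ))
      (((cfp x (n + 1) + cfp x n : ℕ) : ℝ) / ((cfq x (n + 1) + cfq x n : ℕ) : ℝ))
  else
    Set.Ioo (((cfp x (n + 1) + cfp x n : ℕ) : ℝ) / ((cfq x (n + 1) + cfq x n : ℕ) : ℝ))
      ((cfp x (n + 1) : ℝ) / (cfq x (n + 1) : ℝ))

/-- The Lochs index `L_n(x, 𝒞ℱ, ℱ)` from the continued fraction sequence of partitions to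
the Farey sequence of partitions. -/
def lochsCFtoF (x : ℝ) (n : ℕ) : ℕ :=
  sSup {ℓ : ℕ | cfInterval x n ⊆ fareyInterval ℓ x}

/-- The Lochs index `L_n(x, ℱ, 𝒞ℱ)` from the Farey sequence of partitions to the
continued fraction sequence of partitions. -/
def lochsFtoCF (x : ℝ) (n : ℕ) : ℕ :=
  sSup {ℓ : ℕ | fareyInterval n x ⊆ cfInterval x ℓ}

/-- `∑_{i=1}^m a_i`, the sum of the first `m` partial quotients of `x`. -/
def sumA (x : ℝ) (m : ℕ) : ℕ := ∑ i ∈ Finset.range m, cfa x i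

/-- `m(x,n)`: the unique `m` with `∑_{i=1}^m a_i ≤ n < ∑_{i=1}^{m+1} a_i`. -/
def sbm (x : ℝ) (n : ℕ) : ℕ := sSup {m : ℕ | sumA x m ≤ n}

/-- `r(x,n) = n − ∑_{i=1}^{m(x,n)} a_i`. -/
def sbr (x : ℝ) (n : ℕ) : ℕ := n - sumA x (sbm x n)

/-- The length `|I_n^{𝒮ℬ}(x)| = 1/(((r+1)q_m + q_{m-1}) q_m)` of the Stern-Brocot interval
of depth `n` containing `x`, where `m = m(x,n)`, `r = r(x,n)`. -/
def sbLen (x : ℝ) (n : ℕ) : ℝ :=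
  1 / (((((sbr x n + 1) * cfq x (sbm x n + 1) + cfq x (sbm x n) : ℕ)) : ℝ) *
    (cfq x (sbm x n + 1) : ℝ))

def gT (y : ℝ) : ℝ := Int.fract (1 / y)

def gw (k : ℕ) (x : ℝ) : ℝ := (1 + x) / ((k + 1 + x) * (k + 2 + x))

def gu (k : ℕ) (x : ℝ) : ℝ := 1 / (k + 1 + x)

lemma gw_nonneg (k : ℕ) {x : ℝ} (hx : x ∈ Ioo (0:ℝ) 1) : 0 ≤ gw k x := by
  have := hx.1
  unfold gw; positivity

lemma gu_mem (k : ℕ) {x : ℝ} (hx : x ∈ Ioo (0:ℝ) 1) : gu k x ∈ Ioo (0:ℝ) 1 := by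
  have h0 := hx.1
  have hk : (0:ℝ) ≤ k := k.cast_nonneg
  unfold gu
  constructor
  · positivity
  · rw [div_lt_one (by positivity)]; linarith

lemma gw_sum (K : ℕ) {x : ℝ} (hx : x ∈ Ioo (0:ℝ) 1) :
    ∑ k ∈ Finset.range K, gw k x = 1 - (1 + x) / (K + 1 + x) := by
  have h0 := hx.1
  induction K with
  | zero => simp; field_simp; simp
  | succ K ih =>
    have hk : (0:ℝ) ≤ K := K.cast_nonneg
    rw [Finset.sum_range_succ, ih]; unfold gw; push_cast
    have h1 : (K:ℝ) + 1 + x ≠ 0 := by positivity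
    have h2 : (K:ℝ) + 2 + x ≠ 0 := by positivity
    have h3 : (K:ℝ) + 1 + 1 + x ≠ 0 := by positivity
    field_simp
    ring

lemma gw_hasSum {x : ℝ} (hx : x ∈ Ioo (0:ℝ) 1) : HasSum (fun k => gw k x) 1 := by
  rw [hasSum_iff_tendsto_nat_of_nonneg (fun k => gw_nonneg k hx)]
  have : Tendsto (fun K : ℕ => 1 - (1 + x) / ((K:ℝ) + 1 + x)) atTop (nhds (1 - 0)) := by
    apply Tendsto.const_sub
    apply Tendsto.div_atTop tendsto_const_nhds
    apply tendsto_atTop_add_const_right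
    apply tendsto_atTop_add_const_right
    exact tendsto_natCast_atTop_atTop
  rw [sub_zero] at this
  refine this.congr (fun K => (gw_sum K hx).symm)

lemma gT_gu (k : ℕ) {x : ℝ} (hx : x ∈ Ioo (0:ℝ) 1) : gT (gu k x) = x := by
  unfold gT gu
  rw [one_div_one_div, Int.fract_eq_iff]
  refine ⟨hx.1.le, hx.2, k + 1, by push_cast; ring⟩

/-- growth condition -/
def Grow (g : ℝ → ℝ) (C : ℝ) : Prop := ∀ x ∈ Ioo (0:ℝ) 1, |g x| ≤ C * (1 / x) ^ (1/4 : ℝ)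

lemma grow_gu {g : ℝ → ℝ} {C : ℝ} (hg : Grow g C) (k : ℕ) {x : ℝ} (hx : x ∈ Ioo (0:ℝ) 1) :
    |g (gu k x)| ≤ C * (k + 1 + x) ^ (1/4 : ℝ) := by
  have := hg _ (gu_mem k hx)
  rwa [gu, one_div_one_div] at this

lemma grow_C {g : ℝ → ℝ} {C : ℝ} (hg : Grow g C) : 0 ≤ C := by
  have := (abs_nonneg _).trans (hg (1/2) (by norm_num))
  have h2 : (0:ℝ) < (1 / (1/2)) ^ (1/4 : ℝ) := by positivity
  exact nonneg_of_mul_nonneg_left this h2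

lemma grow_summable {g : ℝ → ℝ} {C : ℝ} (hg : Grow g C) {x : ℝ} (hx : x ∈ Ioo (0:ℝ) 1) :
    Summable (fun k => gw k x * g (gu k x)) := by
  have hC := grow_C hg
  have h0 := hx.1
  have hs : Summable (fun k : ℕ => (2 * C) * (1 / ((k + 1 : ℕ) : ℝ) ^ (7/4 : ℝ))) := by
    apply Summable.mul_left
    exact (summable_nat_add_iff 1).2 (Real.summable_one_div_nat_rpow.2 (by norm_num))
  refine Summable.of_norm_bounded hs (fun k => ?_)
  have hk : (0:ℝ) ≤ k := k.cast_nonneg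
  rw [Real.norm_eq_abs, abs_mul, abs_of_nonneg (gw_nonneg k hx)]
  have h1 := grow_gu hg k hx
  have hp : (0:ℝ) < k + 1 + x := by positivity
  have h2 : gw k x ≤ 2 * (1 / (k + 1 + x) ^ (2:ℝ)) := by
    unfold gw
    rw [Real.rpow_two, mul_one_div, div_le_div_iff₀ (by positivity) (by positivity)]
    have := hx.2
    nlinarith [mul_pos hp hp]
  calc gw k x * |g (gu k x)| ≤ (2 * (1 / (k + 1 + x) ^ (2:ℝ))) * (C * (k + 1 + x) ^ (1/4 : ℝ)) := by
        gcongr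
    _ = 2 * C * (1 / (k + 1 + x) ^ (7/4:ℝ)) := by
        have : ((k:ℝ) + 1 + x) ^ (2:ℝ) = (k + 1 + x) ^ (7/4:ℝ) * (k + 1 + x) ^ (1/4 : ℝ) := by
          rw [← Real.rpow_add hp]; norm_num
        rw [this]
        have : ((k:ℝ) + 1 + x) ^ (1/4 : ℝ) ≠ 0 := by positivity
        have : ((k:ℝ) + 1 + x) ^ (7/4 : ℝ) ≠ 0 := by positivity
        field_simp
    _ ≤ 2 * C * (1 / ((k + 1 : ℕ) : ℝ) ^ (7/4:ℝ)) := by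
        gcongr
        push_cast; linarith

def gP (g : ℝ → ℝ) (x : ℝ) : ℝ := (∑' k, ENNReal.ofReal (gw k x * g (gu k x))).toReal

lemma gP_eq {g : ℝ → ℝ} {C : ℝ} (hg : Grow g C) (h0 : ∀ x ∈ Ioo (0:ℝ) 1, 0 ≤ g x)
    {x : ℝ} (hx : x ∈ Ioo (0:ℝ) 1) : gP g x = ∑' k, gw k x * g (gu k x) := by
  unfold gP
  have hn : ∀ k, 0 ≤ gw k x * g (gu k x) :=
    fun k => mul_nonneg (gw_nonneg k hx) (h0 _ (gu_mem k hx))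
  rw [← ENNReal.ofReal_tsum_of_nonneg hn (grow_summable hg hx),
    ENNReal.toReal_ofReal (tsum_nonneg hn)]

lemma ofReal_gP {g : ℝ → ℝ} {C : ℝ} (hg : Grow g C) (h0 : ∀ x ∈ Ioo (0:ℝ) 1, 0 ≤ g x)
    {x : ℝ} (hx : x ∈ Ioo (0:ℝ) 1) :
    ENNReal.ofReal (gP g x) = ∑' k, ENNReal.ofReal (gw k x * g (gu k x)) := by
  have hn : ∀ k, 0 ≤ gw k x * g (gu k x) :=
    fun k => mul_nonneg (gw_nonneg k hx) (h0 _ (gu_mem k hx))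
  rw [gP_eq hg h0 hx, ENNReal.ofReal_tsum_of_nonneg hn (grow_summable hg hx)]

lemma gw_meas (k : ℕ) : Measurable (gw k) := by unfold gw; fun_prop
lemma gu_meas (k : ℕ) : Measurable (gu k) := by unfold gu; fun_prop

lemma gP_meas {g : ℝ → ℝ} (hg : Measurable g) : Measurable (gP g) := by
  unfold gP
  apply ENNReal.measurable_toReal.comp
  apply Measurable.tsum
  intro k
  exact ENNReal.measurable_ofReal.comp ((gw_meas k).mul (hg.comp (gu_meas k)))

lemma gP_nonneg (g : ℝ → ℝ) (x : ℝ) : 0 ≤ gP g x := ENNReal.toReal_nonneg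

def gd (x y : ℝ) (k : ℕ) : ℝ := (1 + x) / (k + 1 + x) - (1 + y) / (k + 1 + y)

lemma gd_abs {x y : ℝ} (hx : x ∈ Ioo (0:ℝ) 1) (hy : y ∈ Ioo (0:ℝ) 1) (k : ℕ) :
    |gd x y (k+1)| ≤ (k + 1) / (k + 2) ^ 2 * |x - y| := by
  have h0 := hx.1
  have h0' := hy.1
  have hk : (0:ℝ) ≤ k := k.cast_nonneg
  have : gd x y (k+1) = (k + 1) / ((k + 2 + x) * (k + 2 + y)) * (x - y) := by
    unfold gd; push_cast
    have h1 : (k:ℝ) + 1 + 1 + x ≠ 0 := by positivity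
    have h2 : (k:ℝ) + 1 + 1 + y ≠ 0 := by positivity
    have h3 : (k:ℝ) + 2 + x ≠ 0 := by positivity
    have h4 : (k:ℝ) + 2 + y ≠ 0 := by positivity
    field_simp; ring
  rw [this, abs_mul, abs_of_nonneg (by positivity)]
  gcongr
  nlinarith

lemma gw_sub (x y : ℝ) (hx : x ∈ Ioo (0:ℝ) 1) (hy : y ∈ Ioo (0:ℝ) 1) (k : ℕ) :
    gw k x - gw k y = gd x y k - gd x y (k+1) := by
  have h0 := hx.1
  have h0' := hy.1
  have hk : (0:ℝ) ≤ k := k.cast_nonneg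
  unfold gd gw; push_cast
  have h1 : (k:ℝ) + 1 + 1 + x ≠ 0 := by positivity
  have h2 : (k:ℝ) + 1 + 1 + y ≠ 0 := by positivity
  have h3 : (k:ℝ) + 2 + x ≠ 0 := by positivity
  have h4 : (k:ℝ) + 2 + y ≠ 0 := by positivity
  have h5 : (k:ℝ) + 1 + x ≠ 0 := by positivity
  have h6 : (k:ℝ) + 1 + y ≠ 0 := by positivity
  field_simp; ring

lemma gP_lip_gen {g : ℝ → ℝ} {C : ℝ} (hg : Grow g C) (h0 : ∀ x ∈ Ioo (0:ℝ) 1, 0 ≤ g x)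
    {x y : ℝ} (hx : x ∈ Ioo (0:ℝ) 1) (hy : y ∈ Ioo (0:ℝ) 1) (α β : ℕ → ℝ) (A B : ℝ)
    (hα : ∀ k, |g (gu k x) - g (gu k y)| ≤ α k * |x - y|)
    (hβ : ∀ k, |g (gu (k+1) y) - g (gu k y)| ≤ β k)
    (hA : ∀ K, ∑ k ∈ Finset.range K, gw k x * α k ≤ A)
    (hB : ∀ K, ∑ k ∈ Finset.range K, ((k:ℝ) + 1) / (k + 2) ^ 2 * β k ≤ B) :
    |gP g x - gP g y| ≤ (A + B) * |x - y| := by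
  rw [gP_eq hg h0 hx, gP_eq hg h0 hy]
  have hC := grow_C hg
  have key : ∀ K : ℕ, |(∑ k ∈ Finset.range (K+1), gw k x * g (gu k x)) -
      (∑ k ∈ Finset.range (K+1), gw k y * g (gu k y)) + gd x y (K+1) * g (gu K y)|
      ≤ (A + B) * |x - y| := by
    intro K
    have e1 : (∑ k ∈ Finset.range (K+1), gw k x * g (gu k x)) -
      (∑ k ∈ Finset.range (K+1), gw k y * g (gu k y)) =
      (∑ k ∈ Finset.range (K+1), gw k x * (g (gu k x) - g (gu k y))) +
      ∑ k ∈ Finset.range (K+1), (gw k x - gw k y) * g (gu k y) := by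
      rw [← Finset.sum_sub_distrib, ← Finset.sum_add_distrib]
      apply Finset.sum_congr rfl; intros; ring
    have e2 : ∑ k ∈ Finset.range (K+1), (gw k x - gw k y) * g (gu k y) +
        gd x y (K+1) * g (gu K y) =
        ∑ k ∈ Finset.range K, gd x y (k+1) * (g (gu (k+1) y) - g (gu k y)) := by
      induction K with
      | zero =>
        have h1 := hx.1
        have h2 := hy.1
        have : gd x y 0 = 0 := by
          unfold gd; simp
          rw [div_self (by positivity), div_self (by positivity)]; simp
        simp [gw_sub x y hx hy, this]
      | succ K ih =>
        rw [Finset.sum_range_succ _ K, ← ih (by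
          rw [← Finset.sum_sub_distrib, ← Finset.sum_add_distrib]
          apply Finset.sum_congr rfl; intros; ring), Finset.sum_range_succ, gw_sub x y hx hy (K+1)]
        ring
    rw [e1, add_assoc, e2, add_mul]
    refine (abs_add_le _ _).trans (add_le_add ?_ ?_)
    · refine (Finset.abs_sum_le_sum_abs _ _).trans ?_
      refine le_trans ?_ (mul_le_mul_of_nonneg_right (hA (K+1)) (abs_nonneg _))
      rw [Finset.sum_mul]
      apply Finset.sum_le_sum
      intro k _
      rw [abs_mul, abs_of_nonneg (gw_nonneg k hx), mul_assoc]
      exact mul_le_mul_of_nonneg_left (hα k) (gw_nonneg k hx)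
    · refine (Finset.abs_sum_le_sum_abs _ _).trans ?_
      refine le_trans ?_ (mul_le_mul_of_nonneg_right (hB K) (abs_nonneg _))
      rw [Finset.sum_mul]
      apply Finset.sum_le_sum
      intro k _
      rw [abs_mul]
      calc |gd x y (k+1)| * |g (gu (k+1) y) - g (gu k y)|
          ≤ ((k + 1) / (k + 2) ^ 2 * |x - y|) * β k :=
            mul_le_mul (gd_abs hx hy k) (hβ k) (abs_nonneg _) (by positivity)
        _ = _ := by ring
  have t1 := (grow_summable hg hx).hasSum.tendsto_sum_nat.comp (tendsto_add_atTop_nat 1)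
  have t2 := (grow_summable hg hy).hasSum.tendsto_sum_nat.comp (tendsto_add_atTop_nat 1)
  have t3 : Tendsto (fun K : ℕ => gd x y (K+1) * g (gu K y)) atTop (nhds 0) := by
    have hlim : Tendsto (fun K : ℕ => (2 * C) * ((K:ℝ) + 1) ^ (-(3/4) : ℝ)) atTop (nhds 0) := by
      rw [← mul_zero (2 * C)]
      apply Tendsto.const_mul
      apply (tendsto_rpow_neg_atTop (by norm_num : (0:ℝ) < 3/4)).comp
      exact tendsto_atTop_add_const_right _ _ tendsto_natCast_atTop_atTop
    refine squeeze_zero_norm (fun K => ?_) hlim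
    have hk : (0:ℝ) ≤ K := K.cast_nonneg
    have hp : (0:ℝ) < K + 1 := by positivity
    rw [Real.norm_eq_abs, abs_mul]
    have a1 : |gd x y (K+1)| ≤ ((K:ℝ) + 1) ^ (-1 : ℝ) := by
      refine (gd_abs hx hy K).trans ?_
      have : |x - y| ≤ 1 := by
        rw [abs_le]; constructor <;> linarith [hx.1, hx.2, hy.1, hy.2]
      calc _ ≤ ((K:ℝ) + 1) / (K + 2) ^ 2 * 1 := by gcongr
        _ ≤ _ := by
          rw [Real.rpow_neg_one, mul_one, inv_eq_one_div,
            div_le_div_iff₀ (by positivity) (by positivity)]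
          nlinarith
    have a2 : |g (gu K y)| ≤ C * (2 * (K + 1) ^ (1/4 : ℝ)) := by
      refine (grow_gu hg K hy).trans ?_
      gcongr
      calc ((K:ℝ) + 1 + y) ^ (1/4 : ℝ) ≤ (16 * (K + 1)) ^ (1/4 : ℝ) := by
            have := hy.1
            gcongr
            linarith [hy.2]
        _ = 2 * (K + 1) ^ (1/4 : ℝ) := by
            rw [Real.mul_rpow (by norm_num) hp.le]
            congr 1
            rw [show (16:ℝ) = 2 ^ (4:ℝ) by norm_num, ← Real.rpow_mul (by norm_num)]
            norm_num
    calc _ ≤ ((K:ℝ) + 1) ^ (-1 : ℝ) * (C * (2 * (K + 1) ^ (1/4 : ℝ))) :=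
          mul_le_mul a1 a2 (abs_nonneg _) (by positivity)
      _ = 2 * C * (((K:ℝ) + 1) ^ (-1 : ℝ) * (K + 1) ^ (1/4 : ℝ)) := by ring
      _ = _ := by rw [← Real.rpow_add hp]; norm_num
  have t := ((t1.sub t2).add t3).abs
  rw [add_zero] at t
  exact le_of_tendsto t (Eventually.of_forall (fun K => key K))

def gdens (x : ℝ) : ℝ := 1 / (Real.log 2 * (1 + x))

def gmu : Measure ℝ := (volume.restrict (Ioo (0:ℝ) 1)).withDensity (fun x => ENNReal.ofReal (gdens x))

lemma gdens_meas : Measurable (fun x => ENNReal.ofReal (gdens x)) := by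
  unfold gdens; fun_prop

lemma log2_pos : 0 < Real.log 2 := Real.log_pos (by norm_num)

lemma lintegral_gmu (F : ℝ → ENNReal) :
    ∫⁻ x, F x ∂gmu = ∫⁻ x in Ioo (0:ℝ) 1, ENNReal.ofReal (gdens x) * F x := by
  unfold gmu
  rw [lintegral_withDensity_eq_lintegral_mul_non_measurable _ gdens_meas
    (Eventually.of_forall fun x => ENNReal.ofReal_lt_top)]
  rfl

lemma gmu_ae : ∀ᵐ x ∂gmu, x ∈ Ioo (0:ℝ) 1 :=
  (withDensity_absolutelyContinuous _ _).ae_le (ae_restrict_mem measurableSet_Ioo)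

lemma lintegral_split (F : ℝ → ENNReal) :
    ∫⁻ x in Ioo (0:ℝ) 1, F x = ∑' k : ℕ, ∫⁻ x in Ioo (0:ℝ) 1,
      ENNReal.ofReal (1 / (k + 1 + x) ^ 2) * F (gu k x) := by
  have inj : ∀ k : ℕ, InjOn (gu k) (Ico (0:ℝ) 1) := by
    intro k x hx y hy h
    unfold gu at h
    have := congrArg (fun z => 1 / z) h
    simp only [one_div_one_div] at this
    linarith
  have der : ∀ k : ℕ, ∀ x ∈ Ico (0:ℝ) 1,
      HasDerivWithinAt (gu k) (-1 / (k + 1 + x) ^ 2) (Ico (0:ℝ) 1) x := by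
    intro k x hx
    have h0 := hx.1
    have hp : (k:ℝ) + 1 + x ≠ 0 := by positivity
    have h1 : HasDerivAt (fun x : ℝ => (k:ℝ) + 1 + x) 1 x := (hasDerivAt_id x).const_add _
    have := h1.inv hp
    have e : gu k = (fun x : ℝ => (k:ℝ) + 1 + x)⁻¹ := by ext; simp [gu]
    rw [e]
    exact this.hasDerivWithinAt
  have meas : ∀ k : ℕ, MeasurableSet (gu k '' Ico (0:ℝ) 1) := fun k =>
    measurableSet_Ico.image_of_measurable_injOn (gu_meas k) (inj k)
  have fl : ∀ k : ℕ, ∀ z ∈ gu k '' Ico (0:ℝ) 1, ⌊1 / z⌋ = (k:ℤ) + 1 := by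
    rintro k z ⟨x, hx, rfl⟩
    rw [gu, one_div_one_div, Int.floor_eq_iff]
    push_cast
    constructor <;> linarith [hx.1, hx.2]
  have disj : Pairwise (Function.onFun Disjoint (fun k : ℕ => gu k '' Ico (0:ℝ) 1)) := by
    intro i j hij
    rw [Function.onFun, Set.disjoint_left]
    intro z hi hj
    have := (fl i z hi).symm.trans (fl j z hj)
    apply hij
    have h : (i:ℤ) = j := by linarith
    exact_mod_cast h
  have un : (⋃ k : ℕ, gu k '' Ico (0:ℝ) 1) = Ioc (0:ℝ) 1 := by
    ext z
    simp only [mem_iUnion]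
    constructor
    · rintro ⟨k, x, hx, rfl⟩
      have h0 := hx.1
      unfold gu
      have hk : (0:ℝ) ≤ k := k.cast_nonneg
      refine ⟨by positivity, ?_⟩
      rw [div_le_one (by positivity)]; linarith
    · intro hz
      have h1 : 1 ≤ 1 / z := by rw [le_div_iff₀ hz.1]; linarith [hz.2]
      have h2 : 1 ≤ ⌊1 / z⌋ := by rw [Int.le_floor]; exact_mod_cast h1
      obtain ⟨k, hk⟩ := Int.eq_ofNat_of_zero_le (sub_nonneg.2 h2)
      refine ⟨k, Int.fract (1 / z), ⟨Int.fract_nonneg _, Int.fract_lt_one _⟩, ?_⟩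
      unfold gu
      have : ((⌊1/z⌋ : ℤ) : ℝ) = k + 1 := by
        have : ⌊1 / z⌋ = (k:ℤ) + 1 := by linarith
        rw [this]; push_cast; rfl
      rw [← this, Int.floor_add_fract, one_div_one_div]
  have e1 : ∫⁻ x in Ioo (0:ℝ) 1, F x = ∫⁻ x in Ioc (0:ℝ) 1, F x := by
    rw [Measure.restrict_congr_set Ioo_ae_eq_Ioc]
  rw [e1, ← un, lintegral_iUnion meas disj]
  congr 1; ext k
  rw [lintegral_image_eq_lintegral_abs_deriv_mul measurableSet_Ico (der k) (inj k),
    Measure.restrict_congr_set (Ioo_ae_eq_Ico (a := (0:ℝ)) (b := 1)).symm]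
  apply setLIntegral_congr_fun measurableSet_Ioo
  intro x hx
  have h0 := hx.1
  simp only
  congr 2
  rw [neg_div, abs_neg, abs_of_nonneg (by positivity)]

lemma gmu_duality (F : ℝ → ENNReal) (hF : Measurable F) :
    ∫⁻ x, F x ∂gmu = ∫⁻ x, ∑' k, ENNReal.ofReal (gw k x) * F (gu k x) ∂gmu := by
  rw [lintegral_gmu, lintegral_gmu, lintegral_split]
  simp_rw [← ENNReal.tsum_mul_left]
  rw [lintegral_tsum]
  · congr 1; ext k
    apply setLIntegral_congr_fun measurableSet_Ioo
    intro x hx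
    have h0 := hx.1
    have hl := log2_pos
    simp only
    rw [← mul_assoc, ← mul_assoc, ← ENNReal.ofReal_mul (by positivity),
      ← ENNReal.ofReal_mul (by unfold gdens; positivity)]
    congr 2
    unfold gdens gw gu
    have hk : (0:ℝ) ≤ k := k.cast_nonneg
    have h5 : (k:ℝ) + 1 + x ≠ 0 := by positivity
    have h6 : (k:ℝ) + 2 + x ≠ 0 := by positivity
    have h7 : 1 + x ≠ 0 := by positivity
    have h8 : (k:ℝ) + 1 + x + 1 ≠ 0 := by positivity
    field_simp
    ring
  · intro k
    apply Measurable.aemeasurable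
    exact gdens_meas.mul ((ENNReal.measurable_ofReal.comp (gw_meas k)).mul (hF.comp (gu_meas k)))

lemma gT_meas : Measurable gT := by
  unfold gT; fun_prop

lemma gmu_dual_mul (g : ℝ → ℝ) (hgm : Measurable g) {C : ℝ} (hg : Grow g C)
    (h0 : ∀ x ∈ Ioo (0:ℝ) 1, 0 ≤ g x) (φ : ℝ → ENNReal) (hφ : Measurable φ) :
    ∫⁻ x, φ (gT x) * ENNReal.ofReal (g x) ∂gmu = ∫⁻ x, φ x * ENNReal.ofReal (gP g x) ∂gmu := by
  rw [gmu_duality (fun x => φ (gT x) * ENNReal.ofReal (g x))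
    ((hφ.comp gT_meas).mul (ENNReal.measurable_ofReal.comp hgm))]
  apply lintegral_congr_ae
  filter_upwards [gmu_ae] with x hx
  rw [ofReal_gP hg h0 hx, ← ENNReal.tsum_mul_left]
  congr 1; ext k
  rw [gT_gu k hx, ENNReal.ofReal_mul (gw_nonneg k hx)]
  ring

lemma gmu_inv (φ : ℝ → ENNReal) (hφ : Measurable φ) :
    ∫⁻ x, φ (gT x) ∂gmu = ∫⁻ x, φ x ∂gmu := by
  rw [gmu_duality (fun x => φ (gT x)) (hφ.comp gT_meas)]
  apply lintegral_congr_ae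
  filter_upwards [gmu_ae] with x hx
  simp_rw [gT_gu _ hx]
  rw [ENNReal.tsum_mul_right, ← ENNReal.ofReal_tsum_of_nonneg (fun k => gw_nonneg k hx)
    (gw_hasSum hx).summable, (gw_hasSum hx).tsum_eq]
  simp

lemma gmu_mp : MeasurePreserving gT gmu gmu := by
  refine ⟨gT_meas, ?_⟩
  ext s hs
  rw [Measure.map_apply gT_meas hs, ← lintegral_indicator_one hs,
    ← lintegral_indicator_one (gT_meas hs), ← gmu_inv _ (measurable_one.indicator hs)]
  rfl

lemma integral_gdens {t : ℝ} (ht : 0 ≤ t) :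
    ∫ x in (0:ℝ)..t, gdens x = Real.log (1 + t) / Real.log 2 := by
  have : ∀ x ∈ uIcc 0 t, HasDerivAt (fun x => Real.log (1 + x) / Real.log 2) (gdens x) x := by
    intro x hx
    rw [uIcc_of_le ht] at hx
    have h1 : (1 + x) ≠ 0 := by linarith [hx.1]
    have := (((hasDerivAt_id x).const_add 1).log h1).div_const (Real.log 2)
    have e : gdens x = 1 / (1 + id x) / Real.log 2 := by
      unfold gdens; rw [id, div_div, mul_comm]
    rw [e]; exact this
  rw [intervalIntegral.integral_eq_sub_of_hasDerivAt this]
  · simp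
  · apply ContinuousOn.intervalIntegrable
    rw [uIcc_of_le ht]
    unfold gdens
    have hl := log2_pos
    apply ContinuousOn.div continuousOn_const (by fun_prop)
    intro x hx
    have := hx.1
    positivity

lemma gmu_Ioc {t : ℝ} (ht : 0 ≤ t) (ht1 : t ≤ 1) :
    gmu (Ioc 0 t) = ENNReal.ofReal (Real.log (1 + t) / Real.log 2) := by
  rw [← lintegral_indicator_one measurableSet_Ioc, lintegral_gmu,
    Measure.restrict_congr_set Ioo_ae_eq_Ioc]
  have : ∀ x, ENNReal.ofReal (gdens x) * (Ioc (0:ℝ) t).indicator 1 x =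
      (Ioc (0:ℝ) t).indicator (fun x => ENNReal.ofReal (gdens x)) x := by
    intro x
    by_cases hx : x ∈ Ioc (0:ℝ) t <;> simp [hx]
  simp_rw [this]
  rw [lintegral_indicator measurableSet_Ioc, Measure.restrict_restrict measurableSet_Ioc,
    inter_eq_left.2 (Ioc_subset_Ioc_right ht1), ← integral_gdens ht,
    intervalIntegral.integral_of_le ht, ofReal_integral_eq_lintegral_ofReal]
  · have hl := log2_pos
    rw [← IntegrableOn, ← integrableOn_Icc_iff_integrableOn_Ioc]
    apply ContinuousOn.integrableOn_Icc
    unfold gdens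
    apply ContinuousOn.div continuousOn_const (by fun_prop)
    intro x hx
    have := hx.1
    positivity
  · filter_upwards [ae_restrict_mem measurableSet_Ioc] with x hx
    have := hx.1
    have hl := log2_pos
    unfold gdens
    simp only [Pi.zero_apply]
    positivity

instance gmu_prob : IsProbabilityMeasure gmu := by
  constructor
  have h1 : gmu univ = gmu (Ioc 0 1) := by
    apply measure_congr
    filter_upwards [gmu_ae] with x hx
    apply propext
    exact ⟨fun _ => (Ioo_subset_Ioc_self hx : x ∈ Ioc (0:ℝ) 1), fun _ => trivial⟩
  rw [h1, gmu_Ioc zero_le_one le_rfl]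
  norm_num

lemma vol_le_gmu (s : Set ℝ) : volume.restrict (Icc (0:ℝ) 1) s ≤ 2 * gmu s := by
  rw [Measure.restrict_congr_set (Ioo_ae_eq_Icc (a := (0:ℝ)) (b := 1)).symm]
  have hle : volume.restrict (Ioo (0:ℝ) 1) ≤ (2:ENNReal) • gmu := by
    refine Measure.le_iff.2 fun t ht => ?_
    rw [Measure.smul_apply, ← lintegral_indicator_one ht, ← lintegral_indicator_one ht,
      lintegral_gmu, smul_eq_mul, ← lintegral_const_mul' _ _ (by simp)]
    apply setLIntegral_mono' measurableSet_Ioo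
    intro x hx
    rw [← mul_assoc]
    apply le_mul_of_one_le_left (by positivity)
    have hl := log2_pos
    have h0 := hx.1
    rw [show (2:ENNReal) = ENNReal.ofReal 2 by simp, ← ENNReal.ofReal_mul (by norm_num),
      ← ENNReal.ofReal_one]
    apply ENNReal.ofReal_le_ofReal
    unfold gdens
    rw [mul_one_div, le_div_iff₀ (by positivity)]
    have : Real.log 2 ≤ 1 := by linarith [Real.log_two_lt_d9]
    nlinarith [hx.2]
  exact hle s

def GLip (h : ℝ → ℝ) (L : ℝ) : Prop :=
  ∀ x ∈ Ioo (0:ℝ) 1, ∀ y ∈ Ioo (0:ℝ) 1, |h x - h y| ≤ L * |x - y|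

lemma one_le_quarter {x : ℝ} (hx : x ∈ Ioo (0:ℝ) 1) : 1 ≤ (1 / x) ^ (1/4 : ℝ) := by
  apply Real.one_le_rpow _ (by norm_num)
  rw [le_div_iff₀ hx.1]; linarith [hx.2]

lemma GLip.dist_le {h : ℝ → ℝ} {L : ℝ} (hL : GLip h L) (hL0 : 0 ≤ L) {x y : ℝ}
    (hx : x ∈ Ioo (0:ℝ) 1) (hy : y ∈ Ioo (0:ℝ) 1) : |h x - h y| ≤ L := by
  refine (hL x hx y hy).trans ?_
  have : |x - y| ≤ 1 := by
    rw [abs_le]; constructor <;> linarith [hx.1, hx.2, hy.1, hy.2]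
  nlinarith

lemma GLip.grow {h : ℝ → ℝ} {L : ℝ} (hL : GLip h L) (hL0 : 0 ≤ L) :
    Grow h (|h (1/2)| + L) := by
  intro x hx
  have h1 := hL.dist_le hL0 hx (y := 1/2) (by norm_num)
  have h2 := one_le_quarter hx
  have h3 : |h x| ≤ |h (1/2)| + L := by
    have := abs_sub_abs_le_abs_sub (h x) (h (1/2))
    linarith
  refine h3.trans (le_mul_of_one_le_right (by positivity) h2)

lemma gu_dist {s t : ℝ} (hs : 0 < s) (ht : 0 < t) : |1 / s - 1 / t| = |s - t| / (s * t) := by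
  rw [div_sub_div _ _ hs.ne' ht.ne', abs_div, abs_of_pos (mul_pos hs ht)]
  congr 1
  rw [abs_sub_comm]; congr 1; ring

lemma GLip.gP {h : ℝ → ℝ} {L : ℝ} (hL : GLip h L) (hL0 : 0 ≤ L)
    (h0 : ∀ x ∈ Ioo (0:ℝ) 1, 0 ≤ h x) : GLip (gP h) (11/12 * L) := by
  intro x hx y hy
  have x0 := hx.1
  have y0 := hy.1
  have key := gP_lip_gen (hL.grow hL0) h0 hx hy
    (fun k => L / ((k + 1 + x) * (k + 1 + y))) (fun k => L / ((k + 1) * (k + 2)))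
    (2/3 * L) (1/4 * L) ?_ ?_ ?_ ?_
  · refine key.trans (le_of_eq ?_); ring
  · intro k
    refine (hL _ (gu_mem k hx) _ (gu_mem k hy)).trans ?_
    unfold gu
    rw [gu_dist (by positivity) (by positivity)]
    rw [show (k:ℝ) + 1 + x - (k + 1 + y) = x - y by ring]
    apply le_of_eq; ring
  · intro k
    refine (hL _ (gu_mem (k+1) hy) _ (gu_mem k hy)).trans ?_
    unfold gu
    rw [gu_dist (by positivity) (by positivity)]
    push_cast
    rw [show (k:ℝ) + 1 + 1 + y - (k + 1 + y) = 1 by ring, abs_one, mul_one_div]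
    have hk : (0:ℝ) ≤ k := k.cast_nonneg
    apply div_le_div_of_nonneg_left hL0 (by positivity)
    nlinarith
  · intro K
    cases K with
    | zero => simp; positivity
    | succ K =>
      rw [Finset.sum_range_succ']
      have s1 : ∑ k ∈ Finset.range K, gw (k+1) x *
          (L / ((((k+1:ℕ):ℝ) + 1 + x) * (((k+1:ℕ):ℝ) + 1 + y))) ≤
          ∑ k ∈ Finset.range K, gw (k+1) x * (L / 4) := by
        apply Finset.sum_le_sum
        intro k _
        apply mul_le_mul_of_nonneg_left _ (gw_nonneg _ hx)
        apply div_le_div_of_nonneg_left hL0 (by norm_num)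
        have hk : (0:ℝ) ≤ k := k.cast_nonneg
        push_cast
        nlinarith
      have s2 := gw_sum (K+1) hx
      rw [Finset.sum_range_succ'] at s2
      rw [← Finset.sum_mul] at s1
      have s3 : 0 ≤ (1 + x) / (((K+1:ℕ):ℝ) + 1 + x) := by positivity
      have s4 : gw 0 x = 1 / (2 + x) := by
        unfold gw; simp; field_simp
      have s5 : 1/3 ≤ gw 0 x := by
        rw [s4]; rw [div_le_div_iff₀] <;> linarith [hx.2]
      have s5' : gw 0 x ≤ 1/2 := by
        rw [s4]; rw [div_le_div_iff₀] <;> linarith [hx.2]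
      have s6 : gw 0 x * (L / ((((0:ℕ):ℝ) + 1 + x) * (((0:ℕ):ℝ) + 1 + y))) ≤ 1/2 * L := by
        apply mul_le_mul s5' _ (by positivity) (by norm_num)
        apply div_le_self hL0
        push_cast; nlinarith
      have s7 : (∑ k ∈ Finset.range K, gw (k+1) x) * (L/4) ≤ (2/3) * (L/4) := by
        apply mul_le_mul_of_nonneg_right _ (by positivity)
        linarith
      linarith
  · intro K
    have : ∀ K : ℕ, ∑ k ∈ Finset.range K, ((k:ℝ) + 1) / (k + 2) ^ 2 * (L / ((k + 1) * (k + 2))) ≤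
        L * (1/4 - 1 / (2 * ((K:ℝ) + 1) * (K + 2))) := by
      intro K
      induction K with
      | zero => simp; norm_num
      | succ K ih =>
        rw [Finset.sum_range_succ]
        have hk : (0:ℝ) ≤ K := K.cast_nonneg
        have e : ((K:ℝ) + 1) / (K + 2) ^ 2 * (L / ((K + 1) * (K + 2))) = L * (1 / (K + 2) ^ 3) := by
          field_simp
        have e2 : 1 / ((K:ℝ) + 2) ^ 3 ≤ 1 / ((K + 1) * (K + 2) * (K + 3)) := by
          apply one_div_le_one_div_of_le (by positivity)
          nlinarith
        have e3 : 1 / (((K:ℝ) + 1) * (K + 2) * (K + 3)) =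
          (1/4 - 1 / (2 * (((K+1:ℕ):ℝ) + 1) * ((K+1:ℕ) + 2))) - (1/4 - 1 / (2 * ((K:ℝ) + 1) * (K + 2))) := by
          push_cast; field_simp; ring
        have := mul_le_mul_of_nonneg_left e2 hL0
        rw [e3] at this
        rw [e]
        linarith
    refine (this K).trans ?_
    have : 0 ≤ L * (1 / (2 * ((K:ℝ) + 1) * (K + 2))) := by positivity
    linarith

lemma gmu_corr (f : ℝ → ENNReal) (hf : Measurable f) (j : ℕ) : ∀ (h : ℝ → ℝ) (L : ℝ),
    Measurable h → 0 ≤ L → GLip h L → (∀ x ∈ Ioo (0:ℝ) 1, 0 ≤ h x) →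
    ∫⁻ x, f (gT^[j] x) * ENNReal.ofReal (h x) ∂gmu ≤
      (∫⁻ x, ENNReal.ofReal (h x) ∂gmu + ENNReal.ofReal (L * (11/12) ^ j)) * ∫⁻ x, f x ∂gmu := by
  induction j with
  | zero =>
    intro h L hm hL0 hL h0
    rw [← lintegral_const_mul _ hf]
    apply lintegral_mono_ae
    filter_upwards [gmu_ae] with x hx
    simp only [Function.iterate_zero, id, pow_zero, mul_one]
    rw [mul_comm]
    gcongr
    calc ENNReal.ofReal (h x) = ∫⁻ y, ENNReal.ofReal (h x) ∂gmu := by simp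
      _ ≤ ∫⁻ y, (ENNReal.ofReal (h y) + ENNReal.ofReal L) ∂gmu := by
        apply lintegral_mono_ae
        filter_upwards [gmu_ae] with y hy
        rw [← ENNReal.ofReal_add (h0 y hy) hL0]
        apply ENNReal.ofReal_le_ofReal
        have := (abs_le.1 (hL.dist_le hL0 hx hy)).2
        linarith
      _ = _ := by
        rw [lintegral_add_right _ measurable_const]; simp
  | succ j ih =>
    intro h L hm hL0 hL h0
    have hg := hL.grow hL0
    simp_rw [Function.iterate_succ_apply]
    rw [gmu_dual_mul h hm hg h0 (fun x => f (gT^[j] x)) (hf.comp (gT_meas.iterate j))]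
    refine (ih (gP h) (11/12 * L) (gP_meas hm) (by positivity) (hL.gP hL0 h0)
      (fun x _ => gP_nonneg h x)).trans (le_of_eq ?_)
    have := gmu_dual_mul h hm hg h0 (fun _ => 1) measurable_const
    simp only [one_mul] at this
    rw [this]
    congr 3; ring

lemma birk_sq (f : ℝ → ℝ) (hm : Measurable f) {C : ℝ} (hg : Grow f C) (h0 : ∀ x, 0 ≤ f x)
    {L : ℝ} (hL0 : 0 ≤ L) (hL : GLip (gP f) L) (m : ℕ) :
    ∫⁻ x, (birkhoffSum gT (fun x => ENNReal.ofReal (f x)) m x) ^ 2 ∂gmu ≤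
      m * (∫⁻ x, ENNReal.ofReal (f x) ^ 2 ∂gmu +
        24 * (∫⁻ x, ENNReal.ofReal (f x) ∂gmu) * ENNReal.ofReal L) +
      m ^ 2 * (∫⁻ x, ENNReal.ofReal (f x) ∂gmu) ^ 2 := by
  set F : ℝ → ENNReal := fun x => ENNReal.ofReal (f x) with hF
  have hFm : Measurable F := ENNReal.measurable_ofReal.comp hm
  set M := ∫⁻ x, ENNReal.ofReal (f x) ∂gmu with hM
  set V := ∫⁻ x, ENNReal.ofReal (f x) ^ 2 ∂gmu with hV
  have hSm : ∀ m, Measurable (birkhoffSum gT F m) := by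
    intro m
    unfold birkhoffSum
    exact Finset.measurable_sum _ (fun i _ => hFm.comp (gT_meas.iterate i))
  have hgM : ∫⁻ x, ENNReal.ofReal (gP f x) ∂gmu = M := by
    have := gmu_dual_mul f hm hg (fun x _ => h0 x) (fun _ => 1) measurable_const
    simp only [one_mul] at this
    rw [← this]
  have cross : ∀ m : ℕ, ∫⁻ x, F x * birkhoffSum gT F m (gT x) ∂gmu ≤
      (m * M + 12 * ENNReal.ofReal L) * M := by
    intro m
    unfold birkhoffSum
    simp_rw [Finset.mul_sum]
    have hmi : ∀ i ∈ Finset.range m, Measurable (fun x => F x * F (gT^[i] (gT x))) :=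
      fun i _ => hFm.mul ((hFm.comp (gT_meas.iterate i)).comp gT_meas)
    rw [lintegral_finsetSum _ hmi]
    calc _ ≤ ∑ j ∈ Finset.range m, (M + ENNReal.ofReal (L * (11/12) ^ j)) * M := by
          apply Finset.sum_le_sum
          intro j _
          have e := gmu_dual_mul f hm hg (fun x _ => h0 x) (fun x => F (gT^[j] x))
            (hFm.comp (gT_meas.iterate j))
          have e' : ∫⁻ x, F x * F (gT^[j] (gT x)) ∂gmu =
              ∫⁻ x, F (gT^[j] (gT x)) * ENNReal.ofReal (f x) ∂gmu :=
            lintegral_congr (fun x => mul_comm _ _)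
          rw [e', e]
          refine (gmu_corr F hFm j (gP f) L (gP_meas hm) hL0 hL (fun x _ => gP_nonneg f x)).trans ?_
          rw [hgM]
      _ = (m * M + ENNReal.ofReal (∑ j ∈ Finset.range m, L * (11/12) ^ j)) * M := by
          rw [← Finset.sum_mul, Finset.sum_add_distrib, Finset.sum_const, Finset.card_range,
            nsmul_eq_mul, ENNReal.ofReal_sum_of_nonneg (fun i _ => by positivity)]
      _ ≤ _ := by
          gcongr
          rw [show (12:ENNReal) = ENNReal.ofReal 12 by simp, ← ENNReal.ofReal_mul (by norm_num)]
          apply ENNReal.ofReal_le_ofReal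
          rw [← Finset.mul_sum, mul_comm]
          apply mul_le_mul_of_nonneg_right _ hL0
          rw [geom_sum_eq (by norm_num)]
          have : (0:ℝ) ≤ (11/12) ^ m := by positivity
          rw [div_le_iff_of_neg (by norm_num)]
          linarith
  induction m with
  | zero => simp
  | succ m ih =>
    simp_rw [birkhoffSum_succ']
    have e : ∀ x, (F x + birkhoffSum gT F m (gT x)) ^ 2 =
        (F x ^ 2 + 2 * (F x * birkhoffSum gT F m (gT x))) + birkhoffSum gT F m (gT x) ^ 2 := by
      intro x; ring
    simp_rw [e]
    have hm2 : Measurable (fun x => F x * birkhoffSum gT F m (gT x)) :=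
      hFm.mul ((hSm m).comp gT_meas)
    have hm3 : Measurable (fun x => birkhoffSum gT F m (gT x) ^ 2) :=
      ((hSm m).comp gT_meas).pow_const 2
    rw [lintegral_add_right _ hm3,
      lintegral_add_left (hFm.pow_const 2), lintegral_const_mul _ hm2,
      gmu_inv (fun x => birkhoffSum gT F m x ^ 2) ((hSm m).pow_const 2)]
    refine (add_le_add (add_le_add le_rfl (mul_le_mul_right (cross m) 2)) ih).trans ?_
    have : ((m + 1 : ℕ) : ENNReal) * (V + 24 * M * ENNReal.ofReal L) + ((m + 1 : ℕ):ENNReal) ^ 2 * M ^ 2 =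
      V + 2 * ((m * M + 12 * ENNReal.ofReal L) * M) +
      (m * (V + 24 * M * ENNReal.ofReal L) + m ^ 2 * M ^ 2) + M ^ 2 := by
      push_cast; ring
    rw [this]
    exact le_self_add

lemma grow_memLp (f : ℝ → ℝ) (hm : Measurable f) {C : ℝ} (hg : Grow f C) : MemLp f 2 gmu := by
  have hC := grow_C hg
  have hl := log2_pos
  rw [memLp_two_iff_integrable_sq hm.aestronglyMeasurable]
  refine ⟨(hm.pow_const 2).aestronglyMeasurable, ?_⟩
  rw [hasFiniteIntegral_iff_enorm, lintegral_gmu]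
  have hi : IntegrableOn (fun x : ℝ => x ^ (-(1/2) : ℝ)) (Ioo 0 1) := by
    have := (intervalIntegral.intervalIntegrable_rpow' (a := 0) (b := 1) (r := -(1/2)) (by norm_num))
    rw [intervalIntegrable_iff_integrableOn_Ioo_of_le zero_le_one] at this
    exact this
  have hi2 := (hi.const_mul (1 / Real.log 2 * C ^ 2)).2
  rw [hasFiniteIntegral_iff_enorm] at hi2
  refine lt_of_le_of_lt ?_ hi2
  apply setLIntegral_mono' measurableSet_Ioo
  intro x hx
  have x0 := hx.1
  have hd : 0 ≤ gdens x := by unfold gdens; positivity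
  rw [Real.enorm_of_nonneg (by positivity), Real.enorm_of_nonneg (by positivity),
    ← ENNReal.ofReal_mul hd]
  apply ENNReal.ofReal_le_ofReal
  rw [mul_assoc]
  apply mul_le_mul
  · unfold gdens
    apply one_div_le_one_div_of_le hl
    nlinarith
  · rw [← sq_abs]
    have := hg x hx
    calc |f x| ^ 2 ≤ (C * (1 / x) ^ (1/4 : ℝ)) ^ 2 := by gcongr
      _ = C ^ 2 * x ^ (-(1/2) : ℝ) := by
        rw [mul_pow]; congr 1
        rw [one_div, Real.inv_rpow x0.le, ← Real.rpow_neg x0.le, ← Real.rpow_natCast,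
          ← Real.rpow_mul x0.le]
        norm_num
  · positivity
  · positivity

theorem wlln (f : ℝ → ℝ) (hm : Measurable f) {C : ℝ} (hg : Grow f C) (h0 : ∀ x, 0 ≤ f x)
    {L : ℝ} (hL0 : 0 ≤ L) (hL : GLip (gP f) L) (m : ℕ) {c : ℝ} (hc : 0 < c) :
    gmu {x | c ≤ |birkhoffSum gT f m x - m * ∫ x, f x ∂gmu|} ≤
      ENNReal.ofReal (m * (∫ x, f x ^ 2 ∂gmu + 24 * (∫ x, f x ∂gmu) * L) / c ^ 2) := by
  have h2 : MemLp f 2 gmu := grow_memLp f hm hg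
  have h2i : ∀ i, MemLp (fun x => f (gT^[i] x)) 2 gmu := fun i =>
    h2.comp_measurePreserving (gmu_mp.iterate i)
  have hS2 : MemLp (birkhoffSum gT f m) 2 gmu := by
    have := memLp_finsetSum (Finset.range m) (fun i _ => h2i i)
    exact this
  have hint : Integrable f gmu := h2.integrable (by norm_num)
  have hmean : ∫ x, birkhoffSum gT f m x ∂gmu = m * ∫ x, f x ∂gmu := by
    unfold birkhoffSum
    rw [integral_finsetSum _ (fun i _ => (h2i i).integrable (by norm_num))]
    have : ∀ i, ∫ x, f (gT^[i] x) ∂gmu = ∫ x, f x ∂gmu := by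
      intro i
      have hp := gmu_mp.iterate i
      have := integral_map (μ := gmu) (φ := gT^[i]) hp.measurable.aemeasurable
        (f := f) hm.aestronglyMeasurable
      rw [← this, hp.map_eq]
    simp [this]
  have hS0 : ∀ x, 0 ≤ birkhoffSum gT f m x := fun x => Finset.sum_nonneg (fun i _ => h0 _)
  have hsq : ∫ x, (birkhoffSum gT f m x) ^ 2 ∂gmu ≤
      m * (∫ x, f x ^ 2 ∂gmu + 24 * (∫ x, f x ∂gmu) * L) + m ^ 2 * (∫ x, f x ∂gmu) ^ 2 := by
    have hM0 : 0 ≤ ∫ x, f x ∂gmu := integral_nonneg h0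
    have hV0 : 0 ≤ ∫ x, f x ^ 2 ∂gmu := integral_nonneg (fun x => by positivity)
    have := birk_sq f hm hg h0 hL0 hL m
    rw [← ENNReal.ofReal_le_ofReal_iff (by positivity),
      ofReal_integral_eq_lintegral_ofReal hS2.integrable_sq (Eventually.of_forall fun x => by positivity)]
    have e1 : ∀ x, ENNReal.ofReal (birkhoffSum gT f m x ^ 2) =
        (birkhoffSum gT (fun x => ENNReal.ofReal (f x)) m x) ^ 2 := by
      intro x
      rw [ENNReal.ofReal_pow (hS0 x)]
      unfold birkhoffSum
      rw [ENNReal.ofReal_sum_of_nonneg (fun i _ => h0 _)]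
    simp_rw [e1]
    refine this.trans (le_of_eq ?_)
    simp_rw [← ENNReal.ofReal_pow (h0 _)]
    rw [← ofReal_integral_eq_lintegral_ofReal hint (Eventually.of_forall h0),
      ← ofReal_integral_eq_lintegral_ofReal h2.integrable_sq
        (Eventually.of_forall fun x => by positivity)]
    rw [ENNReal.ofReal_add (by positivity) (by positivity), ENNReal.ofReal_mul (by positivity),
      ENNReal.ofReal_add (by positivity) (by positivity), ENNReal.ofReal_mul (by positivity),
      ENNReal.ofReal_mul (by positivity), ENNReal.ofReal_mul (by positivity),
      ENNReal.ofReal_pow (by positivity), ENNReal.ofReal_pow hM0]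
    simp
  have ch := ProbabilityTheory.meas_ge_le_variance_div_sq hS2 hc
  rw [hmean] at ch
  refine ch.trans ?_
  apply ENNReal.ofReal_le_ofReal
  apply div_le_div_of_nonneg_right _ (by positivity)
  rw [ProbabilityTheory.variance_eq_sub hS2, hmean]
  simp only [Pi.pow_apply]
  nlinarith

def fA (x : ℝ) : ℝ := |Real.log x|

def fB (N : ℕ) (x : ℝ) : ℝ := ((min ⌊1 / x⌋₊ N : ℕ) : ℝ)

lemma fA_meas : Measurable fA := by unfold fA; exact Real.measurable_log.abs

lemma fB_meas (N : ℕ) : Measurable (fB N) := by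
  unfold fB
  have : Measurable (fun x : ℝ => ⌊1 / x⌋₊) := Nat.measurable_floor.comp (by fun_prop)
  exact (measurable_from_top (f := fun n : ℕ => ((min n N : ℕ) : ℝ))).comp this

lemma fA_eq {x : ℝ} (hx : x ∈ Ioo (0:ℝ) 1) : fA x = - Real.log x := by
  unfold fA
  exact abs_of_neg (Real.log_neg hx.1 hx.2)

lemma fA_grow : Grow fA 4 := by
  intro x hx
  rw [fA_eq hx, abs_of_nonneg (by linarith [Real.log_neg hx.1 hx.2]), ← Real.log_inv, ← one_div]
  have := Real.log_le_rpow_div (x := 1 / x) (ε := 1/4) (one_div_pos.2 hx.1).le (by norm_num)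
  linarith

lemma fB_grow (N : ℕ) : Grow (fB N) N := by
  intro x hx
  rw [abs_of_nonneg (by unfold fB; positivity)]
  have h1 := one_le_quarter hx
  have h2 : fB N x ≤ N := by
    unfold fB
    exact_mod_cast min_le_right _ _
  exact h2.trans (le_mul_of_one_le_right (by positivity) h1)

lemma log_diff {s t : ℝ} (hs : 0 < s) (ht : 0 < t) : Real.log s - Real.log t ≤ (s - t) / t := by
  rw [← Real.log_div hs.ne' ht.ne']
  have := Real.log_le_sub_one_of_pos (div_pos hs ht)
  rw [sub_div, div_self ht.ne']
  exact this

lemma fA_gu (k : ℕ) {x : ℝ} (hx : x ∈ Ioo (0:ℝ) 1) : fA (gu k x) = Real.log (k + 1 + x) := by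
  rw [fA_eq (gu_mem k hx), gu, one_div, Real.log_inv, neg_neg]

lemma fB_gu (N k : ℕ) {x : ℝ} (hx : x ∈ Ioo (0:ℝ) 1) : fB N (gu k x) = ((min (k+1) N : ℕ) : ℝ) := by
  have : ⌊1 / gu k x⌋₊ = k + 1 := by
    have := hx.1
    rw [gu, one_div_one_div, Nat.floor_eq_iff (by positivity)]
    push_cast
    constructor <;> linarith [hx.2]
  rw [fB, this]

lemma fA_lip : GLip (gP fA) 2 := by
  intro x hx y hy
  have x0 := hx.1
  have y0 := hy.1
  have key := gP_lip_gen fA_grow (fun x _ => abs_nonneg _) hx hy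
    (fun k => 1) (fun k => 1 / (k + 1)) 1 1 ?_ ?_ ?_ ?_
  · refine key.trans (le_of_eq ?_); ring
  · intro k
    rw [fA_gu k hx, fA_gu k hy, one_mul]
    have hk : (0:ℝ) ≤ k := k.cast_nonneg
    have a := log_diff (s := k + 1 + x) (t := k + 1 + y) (by positivity) (by positivity)
    have b := log_diff (s := k + 1 + y) (t := k + 1 + x) (by positivity) (by positivity)
    rw [show (k:ℝ) + 1 + x - (k + 1 + y) = x - y by ring] at a
    rw [show (k:ℝ) + 1 + y - (k + 1 + x) = y - x by ring] at b
    have a' : (x - y) / (k + 1 + y) ≤ |x - y| := by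
      refine (le_abs_self _).trans ?_
      rw [abs_div]
      apply div_le_self (abs_nonneg _)
      rw [abs_of_pos (by positivity)]; linarith
    have b' : (y - x) / (k + 1 + x) ≤ |x - y| := by
      refine (le_abs_self _).trans ?_
      rw [abs_div, abs_sub_comm]
      apply div_le_self (abs_nonneg _)
      rw [abs_of_pos (by positivity)]; linarith
    rw [abs_le]; constructor <;> linarith
  · intro k
    rw [fA_gu (k+1) hy, fA_gu k hy]
    have hk : (0:ℝ) ≤ k := k.cast_nonneg
    have a := log_diff (s := k + 2 + y) (t := k + 1 + y) (by positivity) (by positivity)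
    rw [show (k:ℝ) + 2 + y - (k + 1 + y) = 1 by ring] at a
    have b : 1 / ((k:ℝ) + 1 + y) ≤ 1 / (k + 1) :=
      one_div_le_one_div_of_le (by positivity) (by linarith)
    have c : Real.log (k + 1 + y) ≤ Real.log (k + 2 + y) :=
      Real.log_le_log (by positivity) (by linarith)
    push_cast
    rw [show (k:ℝ) + 1 + 1 + y = k + 2 + y by ring, abs_of_nonneg (by linarith)]
    linarith
  · intro K
    simp only [mul_one]
    rw [gw_sum K hx]
    have : 0 ≤ (1 + x) / ((K:ℝ) + 1 + x) := by positivity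
    linarith
  · intro K
    have : ∀ K : ℕ, ∑ k ∈ Finset.range K, ((k:ℝ) + 1) / (k + 2) ^ 2 * (1 / (k + 1)) ≤
        1 - 1 / ((K:ℝ) + 1) := by
      intro K
      induction K with
      | zero => simp
      | succ K ih =>
        rw [Finset.sum_range_succ]
        have hk : (0:ℝ) ≤ K := K.cast_nonneg
        have e : ((K:ℝ) + 1) / (K + 2) ^ 2 * (1 / (K + 1)) = 1 / (K + 2) ^ 2 := by field_simp
        have e2 : 1 / ((K:ℝ) + 2) ^ 2 ≤ 1 / ((K + 1) * (K + 2)) := by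
          apply one_div_le_one_div_of_le (by positivity)
          nlinarith
        have e3 : 1 / (((K:ℝ) + 1) * (K + 2)) = 1 / ((K:ℝ) + 1) - 1 / (((K+1:ℕ):ℝ) + 1) := by
          push_cast; field_simp; ring
        rw [e]
        linarith
    refine (this K).trans ?_
    have : 0 ≤ 1 / ((K:ℝ) + 1) := by positivity
    linarith

lemma fB_lip (N : ℕ) : GLip (gP (fB N)) N := by
  intro x hx y hy
  have key := gP_lip_gen (fB_grow N) (fun x _ => by unfold fB; positivity) hx hy
    (fun k => 0) (fun k => ((min (k+2) N : ℕ) : ℝ) - ((min (k+1) N : ℕ) : ℝ)) 0 N ?_ ?_ ?_ ?_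
  · simpa using key
  · intro k
    rw [fB_gu N k hx, fB_gu N k hy]; simp
  · intro k
    rw [fB_gu N (k+1) hy, fB_gu N k hy, abs_of_nonneg]
    rw [sub_nonneg]
    exact_mod_cast min_le_min_right _ (by omega)
  · intro K; simp
  · intro K
    calc _ ≤ ∑ k ∈ Finset.range K, (((min (k+2) N : ℕ) : ℝ) - ((min (k+1) N : ℕ) : ℝ)) := by
          apply Finset.sum_le_sum
          intro k _
          have hk : (0:ℝ) ≤ k := k.cast_nonneg
          apply mul_le_of_le_one_left
          · rw [sub_nonneg]
            exact_mod_cast min_le_min_right _ (by omega)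
          · rw [div_le_one (by positivity)]; nlinarith
      _ = ((min (K+1) N : ℕ) : ℝ) - ((min 1 N : ℕ) : ℝ) := by
          have := Finset.sum_range_sub (fun k => ((min (k+1) N : ℕ) : ℝ)) K
          rw [zero_add] at this
          exact this
      _ ≤ N := by
          have h1 : ((min (K+1) N : ℕ) : ℝ) ≤ N := by exact_mod_cast min_le_right _ _
          have h2 : (0:ℝ) ≤ ((min 1 N : ℕ) : ℝ) := Nat.cast_nonneg _
          linarith

lemma gmu_real_Ioc (k : ℕ) : gmu.real (Ioc 0 (1 / ((k:ℝ) + 1))) =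
    (Real.log (k + 2) - Real.log (k + 1)) / Real.log 2 := by
  have hk : (0:ℝ) ≤ k := k.cast_nonneg
  have hl := log2_pos
  have h1 : 1 / ((k:ℝ) + 1) ≤ 1 := by rw [div_le_one (by positivity)]; linarith
  rw [measureReal_def, gmu_Ioc (by positivity) h1, ENNReal.toReal_ofReal]
  · rw [← Real.log_div (by positivity) (by positivity)]
    congr 2
    field_simp
    ring
  · apply div_nonneg _ hl.le
    apply Real.log_nonneg
    have : 0 ≤ 1 / ((k:ℝ) + 1) := by positivity
    linarith

lemma le_floor_iff (k : ℕ) {x : ℝ} (hx : x ∈ Ioo (0:ℝ) 1) :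
    k + 1 ≤ ⌊1 / x⌋₊ ↔ x ∈ Ioc 0 (1 / ((k:ℝ) + 1)) := by
  have := hx.1
  have hk : (0:ℝ) ≤ k := k.cast_nonneg
  rw [Nat.le_floor_iff (by positivity), mem_Ioc]
  push_cast
  rw [le_div_iff₀ hx.1, le_div_iff₀ (by positivity), mul_comm]
  tauto

lemma fB_mean (N : ℕ) : ∫ x, fB N x ∂gmu = Real.log (N + 1) / Real.log 2 := by
  have e : ∀ᵐ x ∂gmu, fB N x = ∑ k ∈ Finset.range N,
      (Ioc 0 (1 / ((k:ℝ) + 1))).indicator (fun _ => (1:ℝ)) x := by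
    filter_upwards [gmu_ae] with x hx
    have e1 : ∀ k : ℕ, (Ioc 0 (1 / ((k:ℝ) + 1))).indicator (fun _ => (1:ℝ)) x =
        if k < ⌊1 / x⌋₊ then 1 else 0 := by
      intro k
      have := le_floor_iff k hx
      rw [indicator_apply]
      simp only [← this, Nat.succ_le_iff]
    simp_rw [e1]
    rw [Finset.sum_boole, fB]
    norm_cast
    rw [← Finset.card_range (min ⌊1 / x⌋₊ N)]
    congr 1
    ext k
    simp [and_comm]
  rw [integral_congr_ae e, integral_finsetSum]
  · simp_rw [integral_indicator_const (1:ℝ) measurableSet_Ioc, gmu_real_Ioc]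
    simp only [smul_eq_mul, mul_one]
    rw [← Finset.sum_div]
    congr 1
    have := Finset.sum_range_sub (fun k : ℕ => Real.log (k + 1)) N
    simp only [Nat.cast_zero, zero_add, Real.log_one, sub_zero] at this
    rw [← this]
    apply Finset.sum_congr rfl
    intro k _
    push_cast
    congr 2
    ring
  · intro k _
    exact (integrable_const 1).indicator measurableSet_Ioc

lemma fB_sq (N : ℕ) : ∫ x, fB N x ^ 2 ∂gmu ≤ N * ∫ x, fB N x ∂gmu := by
  have h2 := grow_memLp (fB N) (fB_meas N) (fB_grow N)
  rw [← integral_const_mul]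
  apply integral_mono h2.integrable_sq ((h2.integrable (by norm_num)).const_mul _)
  intro x
  have h0 : 0 ≤ fB N x := by unfold fB; positivity
  have h1 : fB N x ≤ N := by
    unfold fB
    exact_mod_cast min_le_right _ _
  show fB N x ^ 2 ≤ N * fB N x
  nlinarith

lemma wllnB (N m : ℕ) {c : ℝ} (hc : 0 < c) :
    gmu {x | c ≤ |birkhoffSum gT (fB N) m x - m * (Real.log (N + 1) / Real.log 2)|} ≤
      ENNReal.ofReal (m * (25 * N * (Real.log (N + 1) / Real.log 2)) / c ^ 2) := by
  have := wlln (fB N) (fB_meas N) (fB_grow N) (fun x => by unfold fB; positivity)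
    (Nat.cast_nonneg N) (fB_lip N) m hc
  have hs := fB_sq N
  rw [fB_mean] at this hs
  refine this.trans (ENNReal.ofReal_le_ofReal ?_)
  gcongr
  linarith

lemma tailB (N m : ℕ) : gmu {x | ∃ i < m, N < cfa x i} ≤ ENNReal.ofReal (m * (2 / (N + 1))) := by
  have hl := log2_pos
  have h1 : ∀ i, gmu {x | N < cfa x i} ≤ ENNReal.ofReal (2 / (N + 1)) := by
    intro i
    have hp := gmu_mp.iterate i
    have hms : MeasurableSet {x : ℝ | N < ⌊1 / x⌋₊} := by
      have : Measurable (fun x : ℝ => ⌊1 / x⌋₊) := Nat.measurable_floor.comp (by fun_prop)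
      exact this (measurableSet_Ioi (a := N))
    have e : {x | N < cfa x i} = gT^[i] ⁻¹' {x | N < ⌊1 / x⌋₊} := rfl
    rw [e, hp.measure_preimage hms.nullMeasurableSet]
    calc gmu {x | N < ⌊1 / x⌋₊} ≤ gmu (Ioc 0 (1 / ((N:ℝ) + 1))) := by
          apply measure_mono_ae
          filter_upwards [gmu_ae] with x hx h
          exact (le_floor_iff N hx).1 h
      _ ≤ _ := by
          rw [gmu_Ioc (by positivity) (by rw [div_le_one (by positivity)]; linarith [N.cast_nonneg (α := ℝ)])]
          apply ENNReal.ofReal_le_ofReal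
          have h := Real.log_le_sub_one_of_pos (x := 1 + 1 / ((N:ℝ) + 1)) (by positivity)
          rw [div_le_iff₀ hl]
          have h2 : 1 / 2 < Real.log 2 := by linarith [Real.log_two_gt_d9]
          have h3 : 0 < 1 / ((N:ℝ) + 1) := by positivity
          rw [show 2 / ((N:ℝ) + 1) = 2 * (1 / (N + 1)) by ring]
          nlinarith
  have e : {x | ∃ i < m, N < cfa x i} = ⋃ i ∈ Finset.range m, {x | N < cfa x i} := by
    ext x; simp
  rw [e]
  refine (measure_biUnion_finset_le _ _).trans ?_
  refine (Finset.sum_le_sum (fun i _ => h1 i)).trans ?_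
  rw [Finset.sum_const, Finset.card_range, nsmul_eq_mul, ENNReal.ofReal_mul (by positivity)]
  simp

lemma pow_log_int (n : ℕ) : IntegrableOn (fun x : ℝ => x ^ n * (-Real.log x)) (Ioc 0 1) ∧
    ∫ x in Ioc (0:ℝ) 1, x ^ n * (-Real.log x) = 1 / ((n:ℝ) + 1) ^ 2 := by
  set F : ℝ → ℝ := fun x => x ^ (n+1) / ((n:ℝ) + 1) ^ 2 - x ^ n * (x * Real.log x) / (n + 1) with hF
  have hc : ContinuousOn F (Icc 0 1) := by
    apply Continuous.continuousOn
    have := Real.continuous_mul_log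
    fun_prop
  have hd : ∀ x ∈ Ioo (0:ℝ) 1, HasDerivAt F (x ^ n * (-Real.log x)) x := by
    intro x hx
    have x0 := hx.1.ne'
    have h1 : HasDerivAt (fun x : ℝ => x ^ (n+1)) (((n:ℝ)+1) * x ^ n) x := by
      simpa using hasDerivAt_pow (n+1) x
    have h2 := h1.mul (Real.hasDerivAt_log x0)
    have h3 := (h1.div_const (((n:ℝ)+1)^2)).sub (h2.div_const ((n:ℝ)+1))
    have e : F = (fun x => x ^ (n+1) / ((n:ℝ) + 1) ^ 2) -
        (fun x => ((fun x : ℝ => x ^ (n+1)) * Real.log) x / ((n:ℝ) + 1)) := by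
      ext z; simp only [hF, Pi.sub_apply, Pi.mul_apply]; ring
    rw [e]
    refine h3.congr_deriv ?_
    field_simp
    ring
  have hp : ∀ x ∈ Ioo (0:ℝ) 1, 0 ≤ x ^ n * (-Real.log x) := by
    intro x hx
    have := Real.log_neg hx.1 hx.2
    have x0 := hx.1
    apply mul_nonneg (by positivity); linarith
  have hi := intervalIntegral.integrableOn_deriv_of_nonneg hc hd hp
  refine ⟨hi, ?_⟩
  rw [← intervalIntegral.integral_of_le zero_le_one,
    intervalIntegral.integral_eq_sub_of_hasDerivAt_of_le zero_le_one hc hd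
      ((intervalIntegrable_iff_integrableOn_Ioc_of_le zero_le_one).2 hi)]
  simp [hF]

lemma hs_congr {f g : ℕ → ℝ} {a : ℝ} (h : ∀ n, f n = g n) : HasSum f a ↔ HasSum g a := by
  rw [funext h]

lemma eta_two : HasSum (fun n : ℕ => 1 / (2 * (n:ℝ) + 1) ^ 2 - 1 / (2 * (n:ℝ) + 2) ^ 2)
    (Real.pi ^ 2 / 12) := by
  have hz := hasSum_zeta_two
  have hz1 : HasSum (fun n : ℕ => 1 / ((n:ℝ) + 1) ^ 2) (Real.pi ^ 2 / 6) := by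
    have := (hasSum_nat_add_iff' 1).2 hz
    simpa using this
  have he : HasSum (fun n : ℕ => 1 / (2 * (n:ℝ) + 2) ^ 2) (Real.pi ^ 2 / 6 / 4) := by
    have := hz1.div_const 4
    refine (hs_congr (fun n => ?_)).1 this
    rw [show 2 * (n:ℝ) + 2 = 2 * (n + 1) by ring, mul_pow, div_div, mul_comm]; norm_num
  have hs : Summable (fun n : ℕ => 1 / (2 * (n:ℝ) + 1) ^ 2) := by
    have := hz1.summable.comp_injective (i := fun n : ℕ => 2 * n) (fun a b h => by simpa using h)
    refine this.congr (fun n => ?_)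
    simp
  have ho := hs.hasSum
  have htot := HasSum.even_add_odd (f := fun n : ℕ => 1 / ((n:ℝ) + 1) ^ 2)
    (m := ∑' n : ℕ, 1 / (2 * (n:ℝ) + 1) ^ 2) (m' := Real.pi ^ 2 / 6 / 4)
    (by simpa using ho)
    (by
      refine (hs_congr (fun n => ?_)).1 he
      push_cast; ring)
  have h1 := htot.unique hz1
  have h2 := ho.sub he
  rw [eq_sub_of_add_eq h1] at h2
  rw [show Real.pi ^ 2 / 12 = Real.pi ^ 2 / 6 - Real.pi ^ 2 / 6 / 4 - Real.pi ^ 2 / 6 / 4 by ring]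
  exact h2

lemma fA_mean : ∫ x, fA x ∂gmu = Real.pi ^ 2 / 12 / Real.log 2 := by
  have hl := log2_pos
  rw [integral_eq_lintegral_of_nonneg_ae (f := fA) (Eventually.of_forall fun x => abs_nonneg _)
    fA_meas.aestronglyMeasurable, lintegral_gmu, Measure.restrict_congr_set Ioo_ae_eq_Ioc]
  have hterm : ∀ n : ℕ, ∀ x ∈ Ioo (0:ℝ) 1, 0 ≤ (x ^ (2*n) * (-Real.log x) - x ^ (2*n+1) * (-Real.log x)) / Real.log 2 := by
    intro n x hx
    have h1 := Real.log_neg hx.1 hx.2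
    have x0 := hx.1
    apply div_nonneg _ hl.le
    rw [← sub_mul]
    apply mul_nonneg _ (by linarith)
    rw [pow_succ, sub_nonneg]
    apply mul_le_of_le_one_right (by positivity) hx.2.le
  have hae : ∀ᵐ x ∂(volume.restrict (Ioc (0:ℝ) 1)), x ∈ Ioo (0:ℝ) 1 := by
    rw [← Measure.restrict_congr_set (Ioo_ae_eq_Ioc (a := (0:ℝ)) (b := 1))]
    exact ae_restrict_mem measurableSet_Ioo
  have e1 : ∫⁻ x in Ioc (0:ℝ) 1, ENNReal.ofReal (gdens x) * ENNReal.ofReal (fA x) =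
      ∫⁻ x in Ioc (0:ℝ) 1, ∑' n : ℕ, ENNReal.ofReal
        ((x ^ (2*n) * (-Real.log x) - x ^ (2*n+1) * (-Real.log x)) / Real.log 2) := by
    apply lintegral_congr_ae
    filter_upwards [hae] with x hx
    have x0 := hx.1
    have hs : HasSum (fun n : ℕ => (x ^ (2*n) * (-Real.log x) - x ^ (2*n+1) * (-Real.log x)) / Real.log 2)
        (gdens x * fA x) := by
      have hg := hasSum_geometric_of_lt_one (r := x ^ 2) (by positivity) (by nlinarith [hx.2])
      have := hg.mul_right ((1 - x) * (-Real.log x) / Real.log 2)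
      have e2 : gdens x * fA x = (1 - x ^ 2)⁻¹ * ((1 - x) * (-Real.log x) / Real.log 2) := by
        rw [fA_eq hx, gdens]
        have : 1 - x ≠ 0 := by linarith [hx.2]
        have h3 : 1 + x ≠ 0 := by positivity
        rw [show 1 - x ^ 2 = (1 - x) * (1 + x) by ring]
        field_simp
      rw [e2]
      refine (hs_congr (fun n => ?_)).1 this
      rw [← pow_mul, pow_succ]; ring
    rw [← ENNReal.ofReal_mul (by unfold gdens; positivity), ← hs.tsum_eq,
      ENNReal.ofReal_tsum_of_nonneg (fun n => hterm n x hx) hs.summable]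
  rw [e1, lintegral_tsum]
  · have e3 : ∀ n : ℕ, ∫⁻ x in Ioc (0:ℝ) 1, ENNReal.ofReal
        ((x ^ (2*n) * (-Real.log x) - x ^ (2*n+1) * (-Real.log x)) / Real.log 2) =
        ENNReal.ofReal ((1 / (2 * (n:ℝ) + 1) ^ 2 - 1 / (2 * (n:ℝ) + 2) ^ 2) / Real.log 2) := by
      intro n
      have i1 := pow_log_int (2*n)
      have i2 := pow_log_int (2*n+1)
      rw [← ofReal_integral_eq_lintegral_ofReal]
      · rw [integral_div, integral_sub i1.1 i2.1, i1.2, i2.2]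
        push_cast
        congr 5
        ring
      · exact (i1.1.sub i2.1).div_const _
      · filter_upwards [hae] with x hx
        exact hterm n x hx
    simp_rw [e3]
    have hs := eta_two.div_const (Real.log 2)
    rw [← ENNReal.ofReal_tsum_of_nonneg _ hs.summable, hs.tsum_eq, ENNReal.toReal_ofReal (by positivity)]
    intro n
    apply div_nonneg _ hl.le
    rw [sub_nonneg]
    apply one_div_le_one_div_of_le (by positivity)
    gcongr
    norm_num
  · intro n
    apply Measurable.aemeasurable
    fun_prop

lemma wllnA : ∃ K : ℝ, 0 ≤ K ∧ ∀ (m : ℕ) {c : ℝ}, 0 < c →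
    gmu {x | c ≤ |birkhoffSum gT fA m x - m * (Real.pi ^ 2 / 12 / Real.log 2)|} ≤
      ENNReal.ofReal (m * K / c ^ 2) := by
  refine ⟨∫ x, fA x ^ 2 ∂gmu + 24 * (∫ x, fA x ∂gmu) * 2, ?_, ?_⟩
  · have h1 : 0 ≤ ∫ x, fA x ∂gmu := integral_nonneg (fun x => abs_nonneg _)
    have h2 : 0 ≤ ∫ x, fA x ^ 2 ∂gmu := integral_nonneg (fun x => by positivity)
    positivity
  · intro m c hc
    have := wlln fA fA_meas fA_grow (fun x => abs_nonneg _) (by norm_num) fA_lip m hc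
    rw [← fA_mean]
    exact this

def Good (x : ℝ) : Prop := Irrational x ∧ x ∈ Ioo (0:ℝ) 1

lemma good_gT {x : ℝ} (hx : Good x) : Good (gT x) := by
  have hi : Irrational (gT x) := by
    unfold gT Int.fract
    have := hx.1.inv
    rw [← one_div] at this
    exact this.sub_intCast _
  refine ⟨hi, lt_of_le_of_ne (Int.fract_nonneg _) (hi.ne_zero).symm, Int.fract_lt_one _⟩

lemma good_iter {x : ℝ} (hx : Good x) (i : ℕ) : Good (gT^[i] x) := by
  induction i with
  | zero => exact hx
  | succ i ih => rw [Function.iterate_succ_apply']; exact good_gT ih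

lemma cfa_eq (x : ℝ) (i : ℕ) : cfa x i = ⌊1 / gT^[i] x⌋₊ := rfl

lemma cfa_add {x : ℝ} (hx : Good x) (i : ℕ) :
    (cfa x i : ℝ) + gT^[i+1] x = 1 / gT^[i] x := by
  have h := (good_iter hx i).2.1
  rw [cfa_eq, Function.iterate_succ_apply', gT, natCast_floor_eq_intCast_floor (by positivity),
    Int.floor_add_fract]

lemma cfa_pos {x : ℝ} (hx : Good x) (i : ℕ) : 1 ≤ cfa x i := by
  have h := (good_iter hx i).2
  rw [cfa_eq, Nat.one_le_floor_iff, le_div_iff₀ h.1]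
  linarith [h.2]

lemma cfq_pos {x : ℝ} (hx : Good x) (m : ℕ) : 1 ≤ cfq x (m+1) := by
  induction m with
  | zero => simp [cfq]
  | succ m ih =>
    rw [cfq]
    have := Nat.mul_le_mul (cfa_pos hx m) ih
    omega

lemma cfq_mono {x : ℝ} (hx : Good x) : Monotone (cfq x) := by
  apply monotone_nat_of_le_succ
  intro m
  cases m with
  | zero => simp [cfq]
  | succ m =>
    rw [cfq]
    have := Nat.mul_le_mul_right (cfq x (m+1)) (cfa_pos hx m)
    omega

lemma cfq_D {x : ℝ} (hx : Good x) (m : ℕ) :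
    Real.log ((cfq x (m+1) : ℝ) + cfq x m * gT^[m] x) = birkhoffSum gT fA m x := by
  induction m with
  | zero => simp [cfq]
  | succ m ih =>
    have h := (good_iter hx m).2
    have h0 := h.1
    have hq : (1:ℝ) ≤ cfq x (m+1) := by exact_mod_cast cfq_pos hx m
    have ha := cfa_add hx m
    have e : (cfq x (m+1+1) : ℝ) + cfq x (m+1) * gT^[m+1] x =
        ((cfq x (m+1) : ℝ) + cfq x m * gT^[m] x) * (gT^[m] x)⁻¹ := by
      rw [cfq]; push_cast
      have : (cfa x m : ℝ) = 1 / gT^[m] x - gT^[m+1] x := by linarith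
      rw [this]
      field_simp
      ring
    rw [e, Real.log_mul (by positivity) (by positivity), ih, birkhoffSum_succ, fA_eq h, Real.log_inv]

lemma log_cfq {x : ℝ} (hx : Good x) (m : ℕ) :
    Real.log (cfq x (m+1)) ≤ birkhoffSum gT fA m x ∧
    birkhoffSum gT fA m x ≤ Real.log (cfq x (m+1)) + Real.log 2 := by
  have h := (good_iter hx m).2
  have h0 := h.1
  have hq : (1:ℝ) ≤ cfq x (m+1) := by exact_mod_cast cfq_pos hx m
  have hm : (cfq x m : ℝ) ≤ cfq x (m+1) := by exact_mod_cast cfq_mono hx (Nat.le_succ m)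
  have hm0 : (0:ℝ) ≤ cfq x m := Nat.cast_nonneg _
  rw [← cfq_D hx m]
  constructor
  · apply Real.log_le_log (by positivity)
    have : 0 ≤ cfq x m * gT^[m] x := by positivity
    linarith
  · rw [← Real.log_mul (by positivity) (by norm_num)]
    apply Real.log_le_log (by positivity)
    nlinarith [h.2]

lemma sumA_succ (x : ℝ) (m : ℕ) : sumA x (m+1) = sumA x m + cfa x m := Finset.sum_range_succ _ _

lemma sumA_mono (x : ℝ) : Monotone (sumA x) :=
  monotone_nat_of_le_succ (fun m => by rw [sumA_succ]; omega)

lemma le_sumA {x : ℝ} (hx : Good x) (m : ℕ) : m ≤ sumA x m := by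
  induction m with
  | zero => simp
  | succ m ih => rw [sumA_succ]; have := cfa_pos hx m; omega

lemma sb_det {x : ℝ} (hx : Good x) {n m1 m2 : ℕ} (h1 : sumA x m1 ≤ n) (h2 : n < sumA x m2) :
    2 * (birkhoffSum gT fA m1 x - Real.log 2) ≤ -Real.log (sbLen x n) ∧
    -Real.log (sbLen x n) ≤ 2 * birkhoffSum gT fA m2 x + Real.log (n + 2) := by
  have hne : {m : ℕ | sumA x m ≤ n}.Nonempty := ⟨m1, h1⟩
  have hbd : BddAbove {m : ℕ | sumA x m ≤ n} := ⟨n, fun m hm => (le_sumA hx m).trans hm⟩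
  have hmem : sumA x (sbm x n) ≤ n := Nat.sSup_mem hne hbd
  have hm1 : m1 ≤ sbm x n := le_csSup hbd h1
  have hm2 : sbm x n ≤ m2 := by
    by_contra hlt
    push Not at hlt
    have := sumA_mono x hlt.le
    omega
  have hr : sbr x n ≤ n := Nat.sub_le _ _
  set m := sbm x n with hm
  set r := sbr x n with hr'
  have hq : (1:ℝ) ≤ cfq x (m+1) := by exact_mod_cast cfq_pos hx m
  have hq' : (cfq x m : ℝ) ≤ cfq x (m+1) := by exact_mod_cast cfq_mono hx (Nat.le_succ m)
  have hq0 : (0:ℝ) ≤ cfq x m := Nat.cast_nonneg _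
  have hr0 : (0:ℝ) ≤ r := Nat.cast_nonneg _
  have hrn : (r:ℝ) ≤ n := by exact_mod_cast hr
  have e : -Real.log (sbLen x n) = Real.log (((r:ℝ) + 1) * cfq x (m+1) + cfq x m) +
      Real.log (cfq x (m+1)) := by
    rw [sbLen, one_div, Real.log_inv, neg_neg, ← hm, ← hr']
    push_cast
    rw [Real.log_mul (by positivity) (by positivity)]
  have l1 : Real.log (cfq x (m+1)) ≤ Real.log (((r:ℝ) + 1) * cfq x (m+1) + cfq x m) := by
    apply Real.log_le_log (by positivity)
    nlinarith
  have l2 : Real.log (((r:ℝ) + 1) * cfq x (m+1) + cfq x m) ≤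
      Real.log (n + 2) + Real.log (cfq x (m+1)) := by
    rw [← Real.log_mul (by positivity) (by positivity)]
    apply Real.log_le_log (by positivity)
    nlinarith
  have l3 : Real.log (cfq x (m1+1)) ≤ Real.log (cfq x (m+1)) := by
    apply Real.log_le_log
    · exact_mod_cast cfq_pos hx m1
    · exact_mod_cast cfq_mono hx (by omega)
  have l4 : Real.log (cfq x (m+1)) ≤ Real.log (cfq x (m2+1)) := by
    apply Real.log_le_log (by positivity)
    exact_mod_cast cfq_mono hx (by omega)
  have a1 := log_cfq hx m1
  have a2 := log_cfq hx m2
  rw [e]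
  constructor <;> linarith [a1.1, a1.2, a2.1, a2.2]

lemma birk_fB_le (N m : ℕ) (x : ℝ) : birkhoffSum gT (fB N) m x ≤ sumA x m := by
  unfold birkhoffSum sumA
  push_cast
  apply Finset.sum_le_sum
  intro i _
  rw [fB, ← cfa_eq]
  exact_mod_cast min_le_left _ _

lemma birk_fB_eq (N m : ℕ) (x : ℝ) (h : ∀ i < m, cfa x i ≤ N) :
    birkhoffSum gT (fB N) m x = sumA x m := by
  unfold birkhoffSum sumA
  push_cast
  apply Finset.sum_congr rfl
  intro i hi
  rw [fB, ← cfa_eq, min_eq_left (h i (Finset.mem_range.1 hi))]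

lemma good_ae : ∀ᵐ x ∂gmu, Good x := by
  have h1 : ∀ᵐ x ∂gmu, Irrational x := by
    have hv : ∀ᵐ x ∂(volume : Measure ℝ), Irrational x := by
      have : (Set.range ((↑) : ℚ → ℝ)).Countable := Set.countable_range _
      exact this.ae_notMem _
    exact (withDensity_absolutelyContinuous _ _).ae_le (ae_restrict_of_ae hv)
  filter_upwards [h1, gmu_ae] with x a b using ⟨a, b⟩

def sL (n : ℕ) : ℝ := Real.log n
def sX (n : ℕ) : ℝ := n / Real.log n
def sY (n : ℕ) : ℝ := n / Real.sqrt (Real.log n)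
def sN (n : ℕ) : ℕ := ⌊sY n⌋₊
def sM (a : ℝ) (n : ℕ) : ℕ := ⌊a * sX n⌋₊

lemma sL_lim : Tendsto sL atTop atTop := Real.tendsto_log_atTop.comp tendsto_natCast_atTop_atTop

lemma sX_lim : Tendsto sX atTop atTop := by
  have h : Tendsto (fun x : ℝ => x / Real.log x) atTop atTop := by
    have h1 : Tendsto (fun x : ℝ => Real.log x / x) atTop (nhdsWithin 0 (Ioi 0)) := by
      refine tendsto_nhdsWithin_iff.2 ⟨?_, ?_⟩
      · exact Real.isLittleO_log_id_atTop.tendsto_div_nhds_zero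
      · filter_upwards [eventually_gt_atTop 1] with x hx
        have := Real.log_pos hx
        simp only [mem_Ioi]; positivity
    refine (tendsto_inv_nhdsGT_zero.comp h1).congr ?_
    intro x; simp
  exact h.comp tendsto_natCast_atTop_atTop

lemma isqrt_lim : Tendsto (fun n => 1 / Real.sqrt (sL n)) atTop (nhds 0) := by
  have : Tendsto (fun n => Real.sqrt (sL n)) atTop atTop := Real.tendsto_sqrt_atTop.comp sL_lim
  refine this.inv_tendsto_atTop.congr fun n => ?_
  simp

lemma ev_pos : ∀ᶠ n : ℕ in atTop, 0 < sL n ∧ 0 < (n:ℝ) := by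
  filter_upwards [sL_lim.eventually_gt_atTop 0, eventually_gt_atTop 0] with n h1 h2
  exact ⟨h1, by exact_mod_cast h2⟩

lemma sY_eq : ∀ᶠ n : ℕ in atTop, sY n = sX n * Real.sqrt (sL n) := by
  filter_upwards [ev_pos] with n ⟨h1, h2⟩
  unfold sY sX
  change 0 < Real.log n at h1
  unfold sL
  have := Real.sqrt_pos.2 h1
  rw [div_eq_iff this.ne', mul_assoc, Real.mul_self_sqrt h1.le, div_mul_cancel₀ _ h1.ne']

lemma sY_lim : Tendsto sY atTop atTop := by
  have : Tendsto (fun n => sX n * Real.sqrt (sL n)) atTop atTop :=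
    sX_lim.atTop_mul_atTop₀ (Real.tendsto_sqrt_atTop.comp sL_lim)
  exact this.congr' (sY_eq.mono fun n h => h.symm)

lemma sN_lim : Tendsto (fun n => (sN n : ℝ) / sY n) atTop (nhds 1) :=
  (tendsto_nat_floor_div_atTop (R := ℝ)).comp sY_lim

lemma sN1_lim : Tendsto (fun n => ((sN n : ℝ) + 1) / sY n) atTop (nhds 1) := by
  have := sN_lim.add sY_lim.inv_tendsto_atTop
  simp only [add_zero] at this
  refine this.congr fun n => ?_
  simp only [Pi.inv_apply]
  ring

lemma sM_lim {a : ℝ} (ha : 0 ≤ a) : Tendsto (fun n => (sM a n : ℝ) / sX n) atTop (nhds a) :=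
  (tendsto_nat_floor_mul_div_atTop (R := ℝ) ha).comp sX_lim

lemma logN_lim : Tendsto (fun n => Real.log ((sN n : ℝ) + 1) / sL n) atTop (nhds 1) := by
  have h1 : Tendsto (fun n => Real.log (((sN n : ℝ) + 1) / sY n)) atTop (nhds 0) := by
    have := sN1_lim.log one_ne_zero
    simpa using this
  have h2 : Tendsto (fun n => Real.log (((sN n : ℝ) + 1) / sY n) / sL n) atTop (nhds 0) :=
    h1.div_atTop sL_lim
  have h3 : Tendsto (fun n => Real.log (sL n) / sL n) atTop (nhds 0) :=
    (Real.isLittleO_log_id_atTop.tendsto_div_nhds_zero).comp sL_lim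
  have h4 := (h2.add ((h3.const_mul (1/2)).const_sub 1))
  have h4' : Tendsto (fun n => Real.log (((sN n : ℝ) + 1) / sY n) / sL n + (1 - 1/2 * (Real.log (sL n) / sL n))) atTop (nhds 1) := by
    simpa using h4
  refine h4'.congr' ?_
  filter_upwards [ev_pos, sY_lim.eventually_gt_atTop 0] with n ⟨hL, hn⟩ hY
  have e1 : Real.log (sY n) = sL n - 1/2 * Real.log (sL n) := by
    unfold sY
    change 0 < Real.log n at hL
    rw [Real.log_div hn.ne' (Real.sqrt_pos.2 hL).ne', Real.log_sqrt hL.le]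
    unfold sL; ring
  rw [Real.log_div (by positivity) hY.ne', e1]
  field_simp
  ring

lemma sMean_lim {a : ℝ} (ha : 0 ≤ a) :
    Tendsto (fun n => (sM a n : ℝ) * (Real.log ((sN n : ℝ) + 1) / Real.log 2) / n) atTop
      (nhds (a / Real.log 2)) := by
  have h := ((sM_lim ha).mul logN_lim).div_const (Real.log 2)
  rw [mul_one] at h
  refine h.congr' ?_
  filter_upwards [ev_pos] with n ⟨hL, hn⟩
  have := log2_pos
  unfold sX
  change _ / (_ / sL n) * _ / _ = _
  field_simp

lemma sTail_lim {a : ℝ} (ha : 0 ≤ a) :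
    Tendsto (fun n => (sM a n : ℝ) * (2 / ((sN n : ℝ) + 1))) atTop (nhds 0) := by
  have h := (((sM_lim ha).mul (sN1_lim.inv₀ one_ne_zero)).mul isqrt_lim).const_mul 2
  rw [mul_zero, mul_zero] at h
  refine h.congr' ?_
  filter_upwards [ev_pos, sY_eq, sX_lim.eventually_gt_atTop 0] with n ⟨hL, hn⟩ h2 h3
  rw [h2]
  have := Real.sqrt_pos.2 hL
  field_simp

lemma sVarB_lim {a e : ℝ} (ha : 0 ≤ a) (he : 0 < e) :
    Tendsto (fun n : ℕ => (sM a n : ℝ) * (25 * (sN n : ℝ) * (Real.log ((sN n : ℝ) + 1) / Real.log 2))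
      / (e * n) ^ 2) atTop (nhds 0) := by
  have h := (((sMean_lim ha).mul sN_lim).mul isqrt_lim).const_mul (25 / e ^ 2)
  rw [mul_zero, mul_zero] at h
  refine h.congr' ?_
  filter_upwards [ev_pos] with n ⟨hL, hn⟩
  have := Real.sqrt_pos.2 hL
  have := log2_pos
  unfold sY
  change _ * (_ * (_ / (_ / Real.sqrt (sL n))) * _) = _
  field_simp

lemma sVarA_lim {a e K : ℝ} (ha : 0 ≤ a) (he : 0 < e) :
    Tendsto (fun n : ℕ => (sM a n : ℝ) * K / (e * sX n) ^ 2) atTop (nhds 0) := by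
  have h := ((sM_lim ha).mul sX_lim.inv_tendsto_atTop).const_mul (K / e ^ 2)
  rw [mul_zero, mul_zero] at h
  refine h.congr' ?_
  filter_upwards [sX_lim.eventually_gt_atTop 0] with n h3
  simp only [Pi.inv_apply]
  field_simp

lemma sLog_lim : Tendsto (fun n : ℕ => Real.log ((n:ℝ) + 2) / sX n) atTop (nhds 0) := by
  have h0 : Tendsto (fun n : ℕ => 2 * ((Real.log (n:ℝ)) ^ 2 / (n:ℝ))) atTop (nhds 0) := by
    have := ((Real.isLittleO_pow_log_id_atTop (n := 2)).tendsto_div_nhds_zero.comp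
      tendsto_natCast_atTop_atTop).const_mul 2
    simpa using this
  refine squeeze_zero' ?_ ?_ h0
  · filter_upwards [sX_lim.eventually_gt_atTop 0] with n h
    have : 0 ≤ Real.log ((n:ℝ) + 2) := Real.log_nonneg (by linarith [n.cast_nonneg (α := ℝ)])
    positivity
  · filter_upwards [ev_pos, eventually_ge_atTop 2] with n ⟨hL, hn⟩ h2
    have h2' : (2:ℝ) ≤ n := by exact_mod_cast h2
    have : Real.log ((n:ℝ) + 2) ≤ 2 * Real.log n := by
      have e : 2 * Real.log n = Real.log ((n:ℝ)^2) := by rw [Real.log_pow]; push_cast; ring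
      rw [e]
      exact Real.log_le_log (by linarith) (by nlinarith)
    change 0 < Real.log n at hL
    unfold sX
    rw [div_div_eq_mul_div, ← mul_div_assoc]
    exact div_le_div_of_nonneg_right (by nlinarith) hn.le

lemma ofReal_lim {f : ℕ → ℝ} (h : Tendsto f atTop (nhds 0)) :
    Tendsto (fun n => ENNReal.ofReal (f n)) atTop (nhds 0) := by
  have := (ENNReal.continuous_ofReal.tendsto 0).comp h
  rw [ENNReal.ofReal_zero] at this
  exact this

theorem sb_main (ε : ℝ) (hε : 0 < ε) :
    Tendsto (fun n : ℕ => (volume.restrict (Set.Icc (0 : ℝ) 1)) {x : ℝ | ε ≤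
      ‖-Real.log (sbLen x n) / (Real.pi ^ 2 / 6 * (n / Real.log n)) - 1‖}) atTop (nhds 0) := by
  obtain ⟨K, hK0, hK⟩ := wllnA
  have hc := log2_pos
  set c := Real.log 2 with hcdef
  set κ := Real.pi ^ 2 / 12 / c with hκ
  have hκ0 : 0 < κ := by have := Real.pi_pos; positivity
  have hκc : κ * c = Real.pi ^ 2 / 12 := by rw [hκ]; field_simp
  obtain ⟨η, hη0, hη1, hηε⟩ : ∃ η : ℝ, 0 < η ∧ η < 1 ∧ η + η / (κ * c) < ε := by
    have hk : 0 < 1 + 1 / (κ * c) := by positivity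
    refine ⟨min (1/2) (ε / 2 / (1 + 1 / (κ * c))), by positivity, ?_, ?_⟩
    · exact (min_le_left _ _).trans_lt (by norm_num)
    · have h1 := min_le_right (1/2) (ε / 2 / (1 + 1 / (κ * c)))
      rw [le_div_iff₀ hk] at h1
      set y := min (1/2) (ε / 2 / (1 + 1 / (κ * c)))
      have : y + y / (κ * c) = y * (1 + 1 / (κ * c)) := by ring
      rw [this]; linarith
  have ha1 : 0 ≤ (1 - η) * c := by have : 0 < 1 - η := by linarith
                                   positivity
  have ha2 : 0 ≤ (1 + η) * c := by positivity
  have he : 0 < η / 2 := by positivity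
  -- the exceptional bound
  have hbad := ((((ofReal_lim (sTail_lim ha1)).add (ofReal_lim (sVarB_lim ha1 he))).add
    (ofReal_lim (sVarB_lim ha2 he))).add (ofReal_lim (sVarA_lim (K := K) ha1 hη0))).add
    (ofReal_lim (sVarA_lim (K := K) ha2 hη0))
  have hbad2 := ENNReal.Tendsto.const_mul (a := 2) hbad (Or.inr (by norm_num))
  simp only [add_zero, mul_zero] at hbad2
  refine tendsto_of_tendsto_of_tendsto_of_le_of_le' tendsto_const_nhds hbad2
    (Eventually.of_forall fun _ => zero_le) ?_
  -- deterministic limits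
  have l1 := sMean_lim ha1
  have l2 := sMean_lim ha2
  rw [← hcdef, mul_div_cancel_right₀ _ hc.ne'] at l1 l2
  have l3 : Tendsto (fun n => (κ * ((sM ((1 - η) * c) n : ℝ) / sX n) - η - c * (sX n)⁻¹) / (κ * c))
      atTop (nhds ((κ * ((1 - η) * c) - η - c * 0) / (κ * c))) :=
    ((((sM_lim ha1).const_mul κ).sub_const η).sub
      (sX_lim.inv_tendsto_atTop.const_mul c)).div_const _
  have l4 : Tendsto (fun n : ℕ => (κ * ((sM ((1 + η) * c) n : ℝ) / sX n) + η
      + 1/2 * (Real.log ((n:ℝ) + 2) / sX n)) / (κ * c))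
      atTop (nhds ((κ * ((1 + η) * c) + η + 1/2 * 0) / (κ * c))) :=
    ((((sM_lim ha2).const_mul κ).add_const η).add (sLog_lim.const_mul _)).div_const _
  have v3 : 1 - ε < (κ * ((1 - η) * c) - η - c * 0) / (κ * c) := by
    have : (κ * ((1 - η) * c) - η - c * 0) / (κ * c) = 1 - (η + η / (κ * c)) := by
      field_simp; ring
    rw [this]; linarith
  have v4 : (κ * ((1 + η) * c) + η + 1/2 * 0) / (κ * c) < 1 + ε := by
    have : (κ * ((1 + η) * c) + η + 1/2 * 0) / (κ * c) = 1 + (η + η / (κ * c)) := by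
      field_simp; ring
    rw [this]; linarith
  filter_upwards [ev_pos, sX_lim.eventually_gt_atTop 0,
    l1.eventually_lt_const (show 1 - η < 1 - η / 2 by linarith),
    l2.eventually_const_lt (show 1 + η / 2 < 1 + η by linarith),
    l3.eventually_const_lt v3, l4.eventually_lt_const v4] with n ⟨hL, hn⟩ hX e1 e2 e3 e4
  refine (vol_le_gmu _).trans (mul_le_mul_right ?_ 2)
  set m1 := sM ((1 - η) * c) n with hm1
  set m2 := sM ((1 + η) * c) n with hm2
  set N := sN n with hN
  rw [div_lt_iff₀ hn] at e1
  rw [lt_div_iff₀ hn] at e2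
  set S1 := {x : ℝ | ∃ i < m1, N < cfa x i} with hS1
  set S2 := {x : ℝ | η / 2 * n ≤ |birkhoffSum gT (fB N) m1 x - m1 * (Real.log (N+1)/Real.log 2)|} with hS2
  set S3 := {x : ℝ | η / 2 * n ≤ |birkhoffSum gT (fB N) m2 x - m2 * (Real.log (N+1)/Real.log 2)|} with hS3
  set S4 := {x : ℝ | η * sX n ≤ |birkhoffSum gT fA m1 x - m1 * (Real.pi^2/12/Real.log 2)|} with hS4
  set S5 := {x : ℝ | η * sX n ≤ |birkhoffSum gT fA m2 x - m2 * (Real.pi^2/12/Real.log 2)|} with hS5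
  have hsub : gmu {x : ℝ | ε ≤ ‖-Real.log (sbLen x n) / (Real.pi ^ 2 / 6 * (n / Real.log n)) - 1‖}
      ≤ gmu (S1 ∪ S2 ∪ S3 ∪ S4 ∪ S5) := by
    apply measure_mono_ae
    filter_upwards [good_ae] with x hx hbx
    change ε ≤ ‖_‖ at hbx
    by_contra hcon
    change ¬ (x ∈ (S1 ∪ S2 ∪ S3 ∪ S4 ∪ S5)) at hcon
    simp only [mem_union, not_or] at hcon
    obtain ⟨⟨⟨⟨n1, n2⟩, n3⟩, n4⟩, n5⟩ := hcon
    simp only [hS1, hS2, hS3, hS4, hS5, mem_setOf_eq, not_le, not_exists, not_and, not_lt] at n1 n2 n3 n4 n5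
    rw [abs_lt] at n2 n3 n4 n5
    rw [← hcdef, ← hκ] at n4 n5
    rw [← hcdef] at n2 n3
    have s1 : sumA x m1 ≤ n := by
      have := birk_fB_eq N m1 x n1
      have h : ((sumA x m1 : ℕ) : ℝ) ≤ n := by rw [← this]; nlinarith
      exact_mod_cast h
    have s2 : n < sumA x m2 := by
      have := birk_fB_le N m2 x
      have h : (n:ℝ) < ((sumA x m2 : ℕ) : ℝ) := by nlinarith
      exact_mod_cast h
    obtain ⟨b1, b2⟩ := sb_det hx s1 s2
    have hden : Real.pi ^ 2 / 6 * (n / Real.log n) = 2 * (κ * c) * sX n := by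
      rw [hκc]; unfold sX; ring
    have hdpos : 0 < 2 * (κ * c) * sX n := by positivity
    rw [hden] at hbx
    refine absurd hbx (not_le.2 ?_)
    rw [Real.norm_eq_abs, abs_sub_lt_iff]
    have e3' : (1 - ε) * (2 * (κ * c) * sX n) < 2 * (κ * m1 - η * sX n - c) := by
      rw [lt_div_iff₀ (by positivity)] at e3
      have := mul_lt_mul_of_pos_right e3 (show 0 < 2 * sX n by positivity)
      have q : (κ * ((m1 : ℝ) / sX n) - η - c * (sX n)⁻¹) * (2 * sX n) = 2 * (κ * m1 - η * sX n - c) := by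
        field_simp
      rw [q] at this
      linarith
    have e4' : 2 * (κ * m2 + η * sX n) + Real.log (n + 2) < (1 + ε) * (2 * (κ * c) * sX n) := by
      rw [div_lt_iff₀ (by positivity)] at e4
      have := mul_lt_mul_of_pos_right e4 (show 0 < 2 * sX n by positivity)
      have q : (κ * ((m2 : ℝ) / sX n) + η + 1/2 * (Real.log ((n:ℝ) + 2) / sX n)) * (2 * sX n)
          = 2 * (κ * m2 + η * sX n) + Real.log (n + 2) := by
        field_simp
      rw [q] at this
      linarith
    constructor
    · have : -Real.log (sbLen x n) / (2 * (κ * c) * sX n) < 1 + ε := by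
        rw [div_lt_iff₀ hdpos]; linarith
      linarith
    · have : 1 - ε < -Real.log (sbLen x n) / (2 * (κ * c) * sX n) := by
        rw [lt_div_iff₀ hdpos]; linarith
      linarith
  refine hsub.trans ?_
  refine (measure_union_le _ _).trans (add_le_add ?_ (hK m2 (by positivity)))
  refine (measure_union_le _ _).trans (add_le_add ?_ (hK m1 (by positivity)))
  refine (measure_union_le _ _).trans (add_le_add ?_ (wllnB N m2 (by positivity)))
  exact (measure_union_le _ _).trans (add_le_add (tailB N m1) (wllnB N m1 (by positivity)))

/-- The Stern-Brocot sequence of partitions is log-balanced in measure with respect to the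
Lebesgue measure on `[0,1]`, with weight function `f_{𝒮ℬ}(n) = (π²/6) n / log n`. -/
theorem sternBrocot_logBalanced_in_measure :
    TendstoInMeasure (volume.restrict (Set.Icc (0 : ℝ) 1))
      (fun (n : ℕ) (x : ℝ) =>
        -Real.log (sbLen x n) / (Real.pi ^ 2 / 6 * (n / Real.log n)))
      atTop (fun _ => (1 : ℝ)) := by
  rw [tendstoInMeasure_iff_norm]
  intro ε hε
  exact sb_main ε hε
end
end

section
/- For each irrational x ∈ (0,1) and each n ∈ ℕ, the continued fraction interval of depth n containing x equals the Farey interval of depth k containing x, where k = q_n + q_{n−1} − 1; that is, I_n^{𝒞ℱ}(x) = I_k^ℱ(x). Equivalently, the fractions p_n/q_n and (p_n + p_{n−1})/(q_n + q_{n−1}) are consecutive elements of the set E_k^ℱ of Farey fractions of order k+1 = q_n + q_{n−1}. -/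
open MeasureTheory Filter Set

noncomputable section

theorem farey_aux (a b c d N : ℕ) (x : ℝ) (hb : 0 < b) (hd : 0 < d) (hdet : c * b = a * d + 1)
    (hab : a ≤ b) (hcd : c ≤ d) (h1 : (a : ℝ) / b < x) (h2 : x < (c : ℝ) / d)
    (hbN : b ≤ N + 1) (hdN : d ≤ N + 1) (hN : N + 1 < b + d) :
    Set.Ioo ((a : ℝ) / b) ((c : ℝ) / d) = fareyInterval N x ∧
    (a : ℝ) / b ∈ fareyPts N ∧ (c : ℝ) / d ∈ fareyPts N ∧
    ∀ y ∈ fareyPts N, y ∉ Set.Ioo ((a : ℝ) / b) ((c : ℝ) / d) := by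
  have m1 : (a : ℝ) / b ∈ fareyPts N := by
    refine ⟨a, b, hb.ne', hbN, hab, ?_, rfl⟩
    have g1 : Nat.gcd a b ∣ c * b := (Nat.gcd_dvd_right a b).mul_left c
    have g2 : Nat.gcd a b ∣ a * d := (Nat.gcd_dvd_left a b).mul_right d
    rw [hdet] at g1
    exact Nat.dvd_one.mp ((Nat.dvd_add_right g2).mp g1)
  have m2 : (c : ℝ) / d ∈ fareyPts N := by
    refine ⟨c, d, hd.ne', hdN, hcd, ?_, rfl⟩
    have g1 : Nat.gcd c d ∣ c * b := (Nat.gcd_dvd_left c d).mul_right b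
    have g2 : Nat.gcd c d ∣ a * d := (Nat.gcd_dvd_right c d).mul_left a
    rw [hdet] at g1
    exact Nat.dvd_one.mp ((Nat.dvd_add_right g2).mp g1)
  have hb' : (0 : ℝ) < b := by exact_mod_cast hb
  have hd' : (0 : ℝ) < d := by exact_mod_cast hd
  have key : ∀ y ∈ fareyPts N, y ∉ Set.Ioo ((a : ℝ) / b) ((c : ℝ) / d) := by
    rintro y ⟨p, q, hq, hqN, -, -, rfl⟩ ⟨k1, k2⟩
    have hq' : (0 : ℝ) < q := by exact_mod_cast Nat.pos_of_ne_zero hq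
    rw [div_lt_div_iff₀ hb' hq'] at k1
    rw [div_lt_div_iff₀ hq' hd'] at k2
    have k1' : a * q + 1 ≤ p * b := by exact_mod_cast k1
    have k2' : p * d + 1 ≤ c * q := by exact_mod_cast k2
    have e1 := Nat.mul_le_mul_right d k1'
    have e2 := Nat.mul_le_mul_right b k2'
    have e3 : c * q * b = (a * d + 1) * q := by rw [← hdet]; ring
    have e4 : b + d ≤ q := by nlinarith
    omega
  refine ⟨?_, m1, m2, key⟩
  have s1 : IsGreatest (fareyPts N ∩ Set.Iio x) ((a : ℝ) / b) := by
    refine ⟨⟨m1, h1⟩, ?_⟩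
    rintro y ⟨hy, hyx⟩
    by_contra hcon
    exact key y hy ⟨not_le.mp hcon, lt_trans hyx h2⟩
  have s2 : IsLeast (fareyPts N ∩ Set.Ioi x) ((c : ℝ) / d) := by
    refine ⟨⟨m2, h2⟩, ?_⟩
    rintro y ⟨hy, hyx⟩
    by_contra hcon
    exact key y hy ⟨lt_trans h1 hyx, not_le.mp hcon⟩
  rw [fareyInterval, s1.csSup_eq, s2.csInf_eq]

theorem gauss_aux (x : ℝ) (hx : x ∈ Set.Ioo (0 : ℝ) 1) (hirr : Irrational x) (n : ℕ) :
    Irrational ((fun y : ℝ => Int.fract (1 / y))^[n] x) ∧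
    0 < ((fun y : ℝ => Int.fract (1 / y))^[n] x) ∧
    ((fun y : ℝ => Int.fract (1 / y))^[n] x) < 1 := by
  induction n with
  | zero => exact ⟨hirr, hx.1, hx.2⟩
  | succ n ih =>
    rw [Function.iterate_succ_apply']
    generalize ((fun y : ℝ => Int.fract (1 / y))^[n] x) = t at ih
    have hi : Irrational (Int.fract (1 / t)) := by
      rw [one_div, Int.fract]
      exact (irrational_inv_iff.mpr ih.1).sub_intCast _
    refine ⟨hi, lt_of_le_of_ne (Int.fract_nonneg _) ?_, Int.fract_lt_one _⟩
    intro h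
    exact hi.ne_zero h.symm

theorem cf_aux (x : ℝ) (hx : x ∈ Set.Ioo (0 : ℝ) 1) (hirr : Irrational x) (n : ℕ) :
    0 < cfq x (n + 1) ∧ cfp x (n + 1) ≤ cfq x (n + 1) ∧
    cfp x (n + 1) + cfp x n ≤ cfq x (n + 1) + cfq x n ∧
    (cfp x n * cfq x (n + 1) : ℤ) - cfp x (n + 1) * cfq x n = (-1) ^ n ∧
    x * (cfq x (n + 1) + ((fun y : ℝ => Int.fract (1 / y))^[n] x) * cfq x n) =
      cfp x (n + 1) + ((fun y : ℝ => Int.fract (1 / y))^[n] x) * cfp x n := by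
  induction n with
  | zero => simp [cfp, cfq]
  | succ n ih =>
    obtain ⟨i1, i2, i3, i4, i5⟩ := ih
    obtain ⟨-, t0, t1⟩ := gauss_aux x hx hirr n
    have ha : 1 ≤ cfa x n := by
      rw [cfa]
      apply Nat.le_floor
      rw [Nat.cast_one]
      exact (one_le_div t0).mpr t1.le
    have hp : cfp x (n + 1 + 1) = cfa x n * cfp x (n + 1) + cfp x n := rfl
    have hq : cfq x (n + 1 + 1) = cfa x n * cfq x (n + 1) + cfq x n := rfl
    have ht : ((fun y : ℝ => Int.fract (1 / y))^[n + 1] x) =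
        1 / ((fun y : ℝ => Int.fract (1 / y))^[n] x) - (cfa x n : ℝ) := by
      rw [Function.iterate_succ_apply', cfa, Int.fract,
        natCast_floor_eq_intCast_floor (by positivity)]
    rw [ht, hp, hq]
    generalize ((fun y : ℝ => Int.fract (1 / y))^[n] x) = t at *
    have h2 : cfa x n * cfp x (n + 1) + cfp x n ≤ cfa x n * cfq x (n + 1) + cfq x n := by
      obtain ⟨b, hb⟩ := Nat.exists_eq_add_of_le ha
      rw [hb]
      nlinarith [Nat.mul_le_mul_left b i2]
    refine ⟨?_, h2, by omega, ?_, ?_⟩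
    · have := Nat.mul_pos ha i1
      omega
    · push_cast
      rw [pow_succ, ← i4]; ring
    · push_cast
      field_simp
      linear_combination i5

/-- The continued fraction interval of depth `n` containing an irrational `x ∈ (0,1)` is
the Farey interval of depth `k = q_n + q_{n-1} − 1` containing `x`; equivalently,
`p_n/q_n` and `(p_n+p_{n-1})/(q_n+q_{n-1})` are consecutive Farey fractions of order
`k + 1 = q_n + q_{n-1}`. Here `q_n = cfq x (n+1)`, `q_{n-1} = cfq x n`, etc. -/
theorem cfInterval_eq_fareyInterval (x : ℝ) (hx : x ∈ Set.Ioo (0 : ℝ) 1)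
    (hirr : Irrational x) (n : ℕ) :
    cfInterval x n = fareyInterval (cfq x (n + 1) + cfq x n - 1) x ∧
    (cfp x (n + 1) : ℝ) / (cfq x (n + 1) : ℝ) ∈ fareyPts (cfq x (n + 1) + cfq x n - 1) ∧
    ((cfp x (n + 1) + cfp x n : ℕ) : ℝ) / ((cfq x (n + 1) + cfq x n : ℕ) : ℝ) ∈
      fareyPts (cfq x (n + 1) + cfq x n - 1) ∧
    ∀ y ∈ fareyPts (cfq x (n + 1) + cfq x n - 1),
      y ∉ Set.Ioo
        (min ((cfp x (n + 1) : ℝ) / (cfq x (n + 1) : ℝ))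
          (((cfp x (n + 1) + cfp x n : ℕ) : ℝ) / ((cfq x (n + 1) + cfq x n : ℕ) : ℝ)))
        (max ((cfp x (n + 1) : ℝ) / (cfq x (n + 1) : ℝ))
          (((cfp x (n + 1) + cfp x n : ℕ) : ℝ) / ((cfq x (n + 1) + cfq x n : ℕ) : ℝ))) := by
  obtain ⟨i1, i2, i3, i4, i5⟩ := cf_aux x hx hirr n
  obtain ⟨-, t0, t1⟩ := gauss_aux x hx hirr n
  generalize ((fun y : ℝ => Int.fract (1 / y))^[n] x) = t at *
  rw [cfInterval]
  generalize cfp x (n + 1) = P' at *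
  generalize cfp x n = P at *
  generalize cfq x (n + 1) = Q' at *
  generalize cfq x n = Q at *
  have hQ' : (0 : ℝ) < Q' := by exact_mod_cast i1
  have hQ : (0 : ℝ) ≤ Q := Nat.cast_nonneg _
  have hS : (0 : ℝ) < ((Q' + Q : ℕ) : ℝ) := by push_cast; positivity
  have hD : (0 : ℝ) < Q' + t * Q := by positivity
  have e1 : (x * Q' - P') * (Q' + t * Q) = t * (P * Q' - P' * Q) := by
    linear_combination (Q' : ℝ) * i5
  have e2 : (P' + P - x * (Q' + Q)) * (Q' + t * Q) = (1 - t) * (P * Q' - P' * Q) := by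
    linear_combination (-(Q' + Q : ℝ)) * i5
  have i4' : (P * Q' : ℝ) - P' * Q = (-1) ^ n := by exact_mod_cast i4
  rw [i4'] at e1 e2
  by_cases hn : Even n
  · rw [if_pos hn]
    rw [hn.neg_one_pow] at i4 e1 e2
    have l1 : (P' : ℝ) / Q' < x := by
      rw [div_lt_iff₀ hQ']
      have := pos_of_mul_pos_left (a := x * Q' - P') (b := (Q' + t * Q : ℝ))
        (by rw [e1]; linarith) hD.le
      linarith
    have l2 : x < ((P' + P : ℕ) : ℝ) / ((Q' + Q : ℕ) : ℝ) := by
      rw [lt_div_iff₀ hS]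
      have := pos_of_mul_pos_left (a := P' + P - x * (Q' + Q)) (b := (Q' + t * Q : ℝ))
        (by rw [e2]; linarith) hD.le
      push_cast
      linarith
    rw [min_eq_left (l1.trans l2).le, max_eq_right (l1.trans l2).le]
    refine farey_aux P' Q' (P' + P) (Q' + Q) _ x i1 (by omega) ?_ i2 i3 l1 l2
      (by omega) (by omega) (by omega)
    zify
    linear_combination i4
  · rw [if_neg hn]
    rw [(Nat.not_even_iff_odd.mp hn).neg_one_pow] at i4 e1 e2
    have l1 : x < (P' : ℝ) / Q' := by
      rw [lt_div_iff₀ hQ']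
      have := pos_of_mul_pos_left (a := P' - x * Q') (b := (Q' + t * Q : ℝ))
        (by linarith) hD.le
      linarith
    have l2 : ((P' + P : ℕ) : ℝ) / ((Q' + Q : ℕ) : ℝ) < x := by
      rw [div_lt_iff₀ hS]
      have := pos_of_mul_pos_left (a := x * (Q' + Q) - (P' + P)) (b := (Q' + t * Q : ℝ))
        (by linarith) hD.le
      push_cast
      linarith
    rw [min_eq_right (l2.trans l1).le, max_eq_left (l2.trans l1).le]
    obtain ⟨r1, r2, r3, r4⟩ := farey_aux (P' + P) (Q' + Q) P' Q' (Q' + Q - 1) x (by omega) i1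
      (by zify; linear_combination -i4) i3 i2 l2 l1
      (by omega) (by omega) (by omega)
    exact ⟨r1, r3, r2, r4⟩
end
end

section
/- For every irrational number x ∈ (0,1) and every integer n ≥ 1, the Lochs index from the continued fraction to the Farey sequence of partitions satisfies L_n(x, 𝒞ℱ, ℱ) = 2 q_n(x) + q_{n−1}(x) − 2; that is, 2 q_n + q_{n−1} − 2 is the largest ℓ ∈ ℕ such that I_n^{𝒞ℱ}(x) ⊆ I_ℓ^ℱ(x). -/
open MeasureTheory Filter Set

noncomputable section

lemma aux_farey (x : ℝ) (hx : x ∈ Set.Ioo (0 : ℝ) 1) (hirr : Irrational x)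
    (a b c d : ℕ) (hb : 0 < b) (hd : 0 < d) (hab : a ≤ b) (hcd : c ≤ d)
    (hdet : c * b = a * d + 1) (h1 : (a : ℝ) / b < x) (h2 : x < (c : ℝ) / d) (l : ℕ) :
    Set.Ioo ((a : ℝ) / b) ((c : ℝ) / d) ⊆ fareyInterval l x ↔ l + 2 ≤ b + d := by
  have hb' : (0 : ℝ) < b := by exact_mod_cast hb
  have hd' : (0 : ℝ) < d := by exact_mod_cast hd
  have hdet' : (c : ℝ) * b = a * d + 1 := by exact_mod_cast hdet
  constructor
  · intro hsub
    by_contra hlt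
    have hle : b + d ≤ l + 1 := by omega
    have hM : ((a + c : ℕ) : ℝ) / ((b + d : ℕ) : ℝ) ∈ fareyPts l := by
      refine ⟨a + c, b + d, by omega, hle, by omega, ?_, rfl⟩
      have e1 : Nat.gcd (a + c) (b + d) ∣ (a + c) * b := (Nat.gcd_dvd_left _ _).mul_right _
      have e2 : Nat.gcd (a + c) (b + d) ∣ a * (b + d) := (Nat.gcd_dvd_right _ _).mul_left _
      have e3 : (a + c) * b = a * (b + d) + 1 := by ring_nf; linarith
      rw [e3] at e1
      exact Nat.dvd_one.mp ((Nat.dvd_add_right e2).mp e1)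
    have hne : x ≠ ((a + c : ℕ) : ℝ) / ((b + d : ℕ) : ℝ) := by
      have := hirr.ne_rat (((a + c : ℕ) : ℚ) / ((b + d : ℕ) : ℚ))
      push_cast at this ⊢
      exact this
    have hI : ((a + c : ℕ) : ℝ) / ((b + d : ℕ) : ℝ) ∈ Set.Ioo ((a : ℝ) / b) ((c : ℝ) / d) := by
      push_cast
      constructor
      · rw [div_lt_div_iff₀ hb' (by positivity)]; nlinarith
      · rw [div_lt_div_iff₀ (by positivity) hd']; nlinarith
    have hF := hsub hI
    generalize ((a + c : ℕ) : ℝ) / ((b + d : ℕ) : ℝ) = m at *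
    rcases lt_or_gt_of_ne hne with h | h
    · have : sInf (fareyPts l ∩ Set.Ioi x) ≤ m :=
        csInf_le ⟨x, fun y hy => le_of_lt hy.2⟩ ⟨hM, h⟩
      exact absurd hF.2 (not_lt.mpr this)
    · have : m ≤ sSup (fareyPts l ∩ Set.Iio x) :=
        le_csSup ⟨x, fun y hy => le_of_lt hy.2⟩ ⟨hM, h⟩
      exact absurd hF.1 (not_lt.mpr this)
  · intro hl
    have key : ∀ y ∈ fareyPts l, (a : ℝ) / b < y → y < (c : ℝ) / d → False := by
      rintro y ⟨p, q, hq, hql, -, -, rfl⟩ hy1 hy2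
      have hq' : (0 : ℝ) < q := by exact_mod_cast Nat.pos_of_ne_zero hq
      rw [div_lt_div_iff₀ hb' hq'] at hy1
      rw [div_lt_div_iff₀ hq' hd'] at hy2
      have g1 : (a : ℤ) * q + 1 ≤ p * b := by exact_mod_cast hy1
      have g2 : (p : ℤ) * d + 1 ≤ c * q := by exact_mod_cast hy2
      have g3 : (c : ℤ) * b = a * d + 1 := by exact_mod_cast hdet
      have hbz : (0 : ℤ) < b := by exact_mod_cast hb
      have hdz : (0 : ℤ) < d := by exact_mod_cast hd
      have e : (q : ℤ) = b * (c * q - p * d) + d * (p * b - a * q) := by linear_combination -(q : ℤ) * g3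
      have : (b : ℤ) + d ≤ q := by
        have t1 : (b : ℤ) * 1 ≤ b * (c * q - p * d) := by gcongr; linarith
        have t2 : (d : ℤ) * 1 ≤ d * (p * b - a * q) := by gcongr; linarith
        linarith
      omega
    apply Set.Ioo_subset_Ioo
    · apply csSup_le
      · exact ⟨0, ⟨0, 1, by simp⟩, hx.1⟩
      · rintro y ⟨hy, hyx⟩
        by_contra hh
        exact key y hy (not_le.mp hh) (lt_trans hyx h2)
    · apply le_csInf
      · exact ⟨1, ⟨1, 1, by simp⟩, hx.2⟩
      · rintro y ⟨hy, hyx⟩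
        by_contra hh
        exact key y hy (lt_trans h1 hyx) (not_le.mp hh)

lemma aux_gauss (x : ℝ) (hx : x ∈ Set.Ioo (0 : ℝ) 1) (hirr : Irrational x) (m : ℕ) :
    (fun y => Int.fract (1 / y))^[m] x ∈ Set.Ioo (0 : ℝ) 1 ∧
      Irrational ((fun y => Int.fract (1 / y))^[m] x) := by
  induction m with
  | zero => exact ⟨hx, hirr⟩
  | succ m ih =>
    rw [Function.iterate_succ_apply']
    generalize (fun y : ℝ => Int.fract (1 / y))^[m] x = t at *
    have h : Irrational (Int.fract (1 / t)) := by
      rw [Int.fract, one_div]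
      exact ih.2.inv.sub_intCast _
    exact ⟨⟨lt_of_le_of_ne (Int.fract_nonneg _) h.ne_zero.symm, Int.fract_lt_one _⟩, h⟩

lemma aux_cfa (x : ℝ) (hx : x ∈ Set.Ioo (0 : ℝ) 1) (hirr : Irrational x) (m : ℕ) :
    1 ≤ cfa x m ∧ (fun y => Int.fract (1 / y))^[m] x *
      (cfa x m + (fun y => Int.fract (1 / y))^[m+1] x) = 1 := by
  obtain ⟨⟨h0, h1⟩, -⟩ := aux_gauss x hx hirr m
  rw [Function.iterate_succ_apply', cfa]
  generalize (fun y : ℝ => Int.fract (1 / y))^[m] x = t at *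
  constructor
  · apply Nat.le_floor
    rw [le_div_iff₀ h0]; simpa using h1.le
  · have : ((⌊1 / t⌋₊ : ℕ) : ℝ) = ((⌊1 / t⌋ : ℤ) : ℝ) := natCast_floor_eq_intCast_floor (by positivity)
    rw [this, Int.floor_add_fract]
    field_simp

lemma aux_inv (x : ℝ) (hx : x ∈ Set.Ioo (0 : ℝ) 1) (hirr : Irrational x) (m : ℕ) :
    x * (cfq x (m + 1) + (fun y => Int.fract (1 / y))^[m] x * cfq x m) =
      cfp x (m + 1) + (fun y => Int.fract (1 / y))^[m] x * cfp x m := by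
  induction m with
  | zero => simp [cfq, cfp]
  | succ m ih =>
    obtain ⟨-, h⟩ := aux_cfa x hx hirr m
    obtain ⟨⟨h0, h1⟩, -⟩ := aux_gauss x hx hirr m
    simp only [cfq, cfp]
    push_cast
    generalize (fun y : ℝ => Int.fract (1 / y))^[m] x = t at *
    generalize (fun y : ℝ => Int.fract (1 / y))^[m+1] x = s at *
    apply mul_left_cancel₀ h0.ne'
    linear_combination ih + (x * cfq x (m+1) - cfp x (m+1)) * h

lemma aux_det (x : ℝ) (m : ℕ) :
    (cfp x (m + 1) : ℤ) * cfq x m - cfp x m * cfq x (m + 1) = -(-1) ^ m := by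
  induction m with
  | zero => simp [cfq, cfp]
  | succ m ih =>
    simp only [cfq, cfp]
    push_cast
    rw [pow_succ]
    linear_combination -ih

lemma aux_pos (x : ℝ) (hx : x ∈ Set.Ioo (0 : ℝ) 1) (hirr : Irrational x) (m : ℕ) :
    (0 < cfq x (m + 1) ∧ cfp x (m + 1) ≤ cfq x (m + 1)) ∧
    (0 < cfq x (m + 2) ∧ cfp x (m + 2) ≤ cfq x (m + 2)) := by
  induction m with
  | zero =>
    have := (aux_cfa x hx hirr 0).1
    simp [cfq, cfp]; omega
  | succ m ih =>
    refine ⟨ih.2, ?_⟩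
    rw [cfq, cfp]
    have := Nat.mul_le_mul_left (cfa x (m+1)) ih.2.2
    exact ⟨by have := ih.1.1; omega, Nat.add_le_add this ih.1.2⟩

/-- The Lochs index from the continued fraction to the Farey sequence of partitions:
`L_n(x, 𝒞ℱ, ℱ) = 2 q_n + q_{n-1} − 2` (with `q_n = cfq x (n+1)`, `q_{n-1} = cfq x n`). -/
theorem lochsCFtoF_eq (x : ℝ) (hx : x ∈ Set.Ioo (0 : ℝ) 1) (hirr : Irrational x)
    (n : ℕ) (hn : 1 ≤ n) :
    lochsCFtoF x n = 2 * cfq x (n + 1) + cfq x n - 2 := by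
  obtain ⟨k, rfl⟩ : ∃ k, n = k + 1 := ⟨n - 1, by omega⟩
  obtain ⟨⟨hq0, hpq0⟩, hq1, hpq1⟩ := aux_pos x hx hirr k
  obtain ⟨⟨h0, h1⟩, -⟩ := aux_gauss x hx hirr (k + 1)
  have hinv := aux_inv x hx hirr (k + 1)
  have hdet := aux_det x (k + 1)
  have key : ∀ l : ℕ, cfInterval x (k + 1) ⊆ fareyInterval l x ↔
      l + 2 ≤ 2 * cfq x (k + 1 + 1) + cfq x (k + 1) := by
    intro l
    unfold cfInterval
    generalize (fun y : ℝ => Int.fract (1 / y))^[k + 1] x = t at *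
    change 0 < cfq x (k + 1 + 1) at hq1
    change cfp x (k + 1 + 1) ≤ cfq x (k + 1 + 1) at hpq1
    generalize cfq x (k + 1 + 1) = q at *
    generalize cfp x (k + 1 + 1) = p at *
    generalize cfq x (k + 1) = q' at *
    generalize cfp x (k + 1) = p' at *
    have hqr : (0 : ℝ) < q := by exact_mod_cast hq1
    have hqr' : (0 : ℝ) < q' := by exact_mod_cast hq0
    have hD : 0 < (q : ℝ) + t * q' := by positivity
    split_ifs with hev
    · rw [hev.neg_one_pow] at hdet
      have hdn : p' * q = p * q' + 1 := by zify; linarith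
      have hdr : (p' : ℝ) * q = p * q' + 1 := by exact_mod_cast hdn
      rw [aux_farey x hx hirr p q (p + p') (q + q') hq1 (by omega) hpq1 (by omega)
        (by rw [add_mul, mul_add]; linarith) ?_ ?_ l]
      · omega
      · rw [div_lt_iff₀ hqr]
        refine lt_of_mul_lt_mul_right ?_ hD.le
        have e : x * q * (q + t * q') = (p + t * p') * q := by rw [← hinv]; ring
        rw [e]; nlinarith
      · push_cast
        rw [lt_div_iff₀ (by positivity)]
        refine lt_of_mul_lt_mul_right ?_ hD.le
        have e : x * (q + q') * (q + t * q') = (p + t * p') * (q + q') := by rw [← hinv]; ring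
        rw [e]; nlinarith
    · rw [(Nat.not_even_iff_odd.mp hev).neg_one_pow] at hdet
      have hdn : p * q' = p' * q + 1 := by zify; linarith
      have hdr : (p : ℝ) * q' = p' * q + 1 := by exact_mod_cast hdn
      rw [aux_farey x hx hirr (p + p') (q + q') p q (by omega) hq1 (by omega) hpq1
        (by rw [add_mul, mul_add]; linarith) ?_ ?_ l]
      · omega
      · push_cast
        rw [div_lt_iff₀ (by positivity)]
        refine lt_of_mul_lt_mul_right ?_ hD.le
        have e : x * (q + q') * (q + t * q') = (p + t * p') * (q + q') := by rw [← hinv]; ring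
        rw [e]; nlinarith
      · rw [lt_div_iff₀ hqr]
        refine lt_of_mul_lt_mul_right ?_ hD.le
        have e : x * q * (q + t * q') = (p + t * p') * q := by rw [← hinv]; ring
        rw [e]; nlinarith
  unfold lochsCFtoF
  simp only [key]
  change 0 < cfq x (k + 1 + 1) at hq1
  apply IsGreatest.csSup_eq
  constructor
  · simp only [Set.mem_setOf_eq]; omega
  · intro l hl
    simp only [Set.mem_setOf_eq] at hl; omega
end
end
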